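/- arXiv:1110.4523 — 6 statements merged into one kernel-verified Lean document; each statement's English description precedes it below -/
import Mathlib

section
/- Let G = (V ∪ {s}, E) be a finite sandpile graph, let W ⊆ V be nonempty, and let ξ be a generalized minimal configuration on W (so the induced subgraph of G on (V ∪ {s}) \ W is allowed to be disconnected). Then there exists a finite set 𝓔 of edges of G, each incident to a vertex of W, such that ν_G[η ∈ R_G : η_W = ξ] = det( K_G(e,f) )_{e,f ∈ 𝓔}. -/
open scoped Classical

namespace Sandpile

/-- A finite sandpile multigraph on vertex set `α` (which plays the role of `V ∪ {s}`),
given by a distinguished sink and symmetric edge multiplicities. -/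
structure Graph (α : Type*) where
  sink : α
  b : α → α → ℕ

namespace Graph

variable {α : Type*} [Fintype α] [DecidableEq α] (G : Graph α)

/-- The non-sink vertices (the set `V`). -/
def VSet : Finset α := Finset.univ.erase G.sink

/-- Degree restricted to a finite set of vertices: `deg_F(x) = ∑_{y ∈ F} b_{xy}`. -/
def degIn (F : Finset α) (x : α) : ℕ := ∑ y ∈ F, G.b x y

/-- Total degree `deg_G(x)`. -/
def deg (x : α) : ℕ := ∑ y, G.b x y

/-- `G` is a genuine finite sandpile graph: symmetric multiplicities, no loops, connected. -/
def IsSandpileGraph : Prop :=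
  (∀ x y, G.b x y = G.b y x) ∧ (∀ x, G.b x x = 0) ∧
    ∀ x y : α, Relation.ReflTransGen (fun u v => 0 < G.b u v) x y

/-- Connectivity of the subgraph induced on the vertex set `S`. -/
def ConnectedOn (S : Set α) : Prop :=
  ∀ x ∈ S, ∀ y ∈ S,
    Relation.ReflTransGen (fun u v => u ∈ S ∧ v ∈ S ∧ 0 < G.b u v) x y

/-- A sandpile is stable if every non-sink vertex carries fewer particles than its degree. -/
def Stable (η : α → ℕ) : Prop := ∀ x ∈ G.VSet, η x < G.deg x

/-- `η` is ample for `F` if some vertex of `F` has at least `deg_F` particles. -/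
def AmpleFor (η : α → ℕ) (F : Finset α) : Prop := ∃ x ∈ F, G.degIn F x ≤ η x

/-- Dhar's burning test: recurrent = stable and ample for every nonempty `F ⊆ V`. -/
def Recurrent (η : α → ℕ) : Prop :=
  G.Stable η ∧ ∀ F ⊆ G.VSet, F.Nonempty → G.AmpleFor η F

/-- Remove one particle at `w` (`η - δ_w`). -/
def SubOne (η : α → ℕ) (w : α) : α → ℕ := fun x => if x = w then η x - 1 else η x

/-- `η` and `ξ` agree on `W` (restriction `η_W = ξ_W`). -/
def EqOn (η ξ : α → ℕ) (W : Finset α) : Prop := ∀ x ∈ W, η x = ξ x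

/-- `ξ` is (generalized) minimal on `W`: it extends to a recurrent sandpile, and no
recurrent extension stays recurrent after removing a particle from a vertex of `W`.
(`η - δ_w ∉ R_G` holds automatically if `η w = 0`, as then `η - δ_w` is not a configuration.) -/
def Minimal (W : Finset α) (ξ : α → ℕ) : Prop :=
  (∃ η, G.Recurrent η ∧ EqOn η ξ W) ∧
    ∀ η, G.Recurrent η → EqOn η ξ W → ∀ w ∈ W, ¬(1 ≤ η w ∧ G.Recurrent (SubOne η w))

/-- `ν_G[P]`: the uniform probability of the event `P` under the uniform measure on
recurrent configurations (configurations are normalized to vanish at the sink). -/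
noncomputable def prob (P : (α → ℕ) → Prop) : ℝ :=
  (Nat.card {η : α → ℕ // η G.sink = 0 ∧ G.Recurrent η ∧ P η} : ℝ) /
    (Nat.card {η : α → ℕ // η G.sink = 0 ∧ G.Recurrent η} : ℝ)

/-- The graph Laplacian with the sink row and column deleted. -/
noncomputable def lapRed :
    Matrix {x : α // x ≠ G.sink} {x : α // x ≠ G.sink} ℝ :=
  Matrix.of fun x y =>
    if (x : α) = (y : α) then (G.deg ↑x : ℝ) else -(G.b ↑x ↑y : ℝ)

/-- `H = (Δ')⁻¹`, extended by `0` on the sink. -/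
noncomputable def Hfun (x y : α) : ℝ :=
  if hx : x = G.sink then 0
  else if hy : y = G.sink then 0
  else (G.lapRed)⁻¹ ⟨x, hx⟩ ⟨y, hy⟩

/-- Oriented edges of the multigraph `G`: an edge from `p.1` to `p.2.1`, with copy
index `p.2.2` (parallel edges are distinct). -/
abbrev OEdge (G : Graph α) : Type _ := {p : α × α × ℕ // p.2.2 < G.b p.1 p.2.1}

/-- `K_G(e,f) = δ_{ef} - Y_G(e,f)` where `Y_G` is the transfer current matrix. -/
noncomputable def Kmat (e f : G.OEdge) : ℝ :=
  (if e = f then 1 else 0) -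
    (G.Hfun e.1.1 f.1.1 - G.Hfun e.1.1 f.1.2.1 - G.Hfun e.1.2.1 f.1.1 +
      G.Hfun e.1.2.1 f.1.2.1)

/-- Unburnt sets of phase one of the burning algorithm based on `Q`:
`U_0 = V`, `U_i = U_{i-1} \ B_i` with `B_i = {x ∈ U_{i-1} \ Q : η x ≥ deg_{U_{i-1}} x}`. -/
def U1 (η : α → ℕ) (Q : Finset α) : ℕ → Finset α
  | 0 => G.VSet
  | i + 1 => (U1 η Q i).filter fun x => x ∈ Q ∨ η x < G.degIn (U1 η Q i) x

/-- The final unburnt set `U^{(1)}_I` of phase one (the sequence `U1` is decreasing,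
hence stabilizes after at most `|α|` steps). -/
def U1lim (η : α → ℕ) (Q : Finset α) : Finset α := G.U1 η Q (Fintype.card α)

/-- Unburnt sets of phase two of the burning algorithm based on `Q`. -/
def U2 (η : α → ℕ) (Q : Finset α) : ℕ → Finset α
  | 0 => G.U1lim η Q
  | i + 1 => (U2 η Q i).filter fun x => η x < G.degIn (U2 η Q i) x

/-- Recurrence in the wired graph `G_W` (note `deg_{G_W}(x) = deg_G(x)` for `x ∈ W`,
and `deg_F` for `F ⊆ W` is the same in `G_W` and `G`). -/
def WiredRecurrent (W : Finset α) (ξ : α → ℕ) : Prop :=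
  (∀ x ∈ W, ξ x < G.deg x) ∧ ∀ F ⊆ W, F.Nonempty → ∃ x ∈ F, G.degIn F x ≤ ξ x

/-- `ξ` is minimal in the wired graph `G_W`. -/
def WiredMinimal (W : Finset α) (ξ : α → ℕ) : Prop :=
  G.WiredRecurrent W ξ ∧ ∀ w ∈ W, ¬(1 ≤ ξ w ∧ G.WiredRecurrent W (SubOne ξ w))

/-- Entry points `E(ξ,W)` of `ξ ∈ R_{G_W}`: vertices burnable at the first step. -/
def entryPoints (W : Finset α) (ξ : α → ℕ) : Finset α :=
  W.filter fun w => G.degIn W w ≤ ξ w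

/-- `x` is burnable given the burnt set `S`: `η(x) ≥ deg_G(x) − ∑_{y ∈ S} b_{xy}`. -/
def Burnable (η : α → ℕ) (S : Finset α) (x : α) : Prop :=
  G.degIn (Finset.univ \ S) x ≤ η x

/-- A burning sequence starting from the burnt set `S`. -/
def IsBurnSeq (η : α → ℕ) : Finset α → List α → Prop
  | _, [] => True
  | S, x :: l => x ∉ S ∧ G.Burnable η S x ∧ IsBurnSeq η (insert x S) l

/-- `B` is a burnt set for `η`: some burning sequence from `{s}` burns exactly `B`. -/
def IsBurntSet (η : α → ℕ) (B : Finset α) : Prop :=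
  ∃ l : List α, G.IsBurnSeq η {G.sink} l ∧ l.toFinset = B

/-- Reachability within the vertex set `S`. -/
def ReachIn (S : Set α) (x y : α) : Prop :=
  Relation.ReflTransGen (fun u v => u ∈ S ∧ v ∈ S ∧ 0 < G.b u v) x y

/-- `C` is a connected component of the subgraph induced on `(V ∪ {s}) \ W`
that does not contain the sink. -/
def IsHoleComp (W C : Finset α) : Prop :=
  C.Nonempty ∧ G.sink ∉ C ∧
    ∀ x ∈ C, ∀ y : α, y ∈ C ↔ y ∉ W ∧ G.ReachIn {a : α | a ∉ W} x y

/-- Adjacency induced by a finite set `t` of (undirected, indexed) edges. -/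
def edgeRel (t : Finset (Sym2 α × ℕ)) (u v : α) : Prop := ∃ k : ℕ, (s(u, v), k) ∈ t

/-- `t` is a spanning tree of the multigraph `G`: it consists of edges of `G`
(parallel edges distinct), it spans (connected), and every edge is a bridge
(equivalently, it is acyclic). -/
def IsSpanningTree (t : Finset (Sym2 α × ℕ)) : Prop :=
  (∀ p ∈ t, ∃ x y : α, p.1 = s(x, y) ∧ p.2 < G.b x y) ∧
  (∀ u v : α, Relation.ReflTransGen (edgeRel t) u v) ∧
  ∀ p ∈ t, ∀ x y : α, p.1 = s(x, y) →
    ¬ Relation.ReflTransGen (edgeRel (t.erase p)) x y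

/-- Adjacency induced by a set of (undirected, indexed) edges. -/
def edgeRelSet (t : Set (Sym2 α × ℕ)) (u v : α) : Prop := ∃ k : ℕ, (s(u, v), k) ∈ t

/-- Set version of `IsSpanningTree`. -/
def IsSpanningTreeSet (t : Set (Sym2 α × ℕ)) : Prop :=
  (∀ p ∈ t, ∃ x y : α, p.1 = s(x, y) ∧ p.2 < G.b x y) ∧
  (∀ u v : α, Relation.ReflTransGen (edgeRelSet t) u v) ∧
  ∀ p ∈ t, ∀ x y : α, p.1 = s(x, y) →
    ¬ Relation.ReflTransGen (edgeRelSet (t \ {p})) x y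

/-- The step at which `x` burns in phase one (0 for the sink; `sInf ∅ = 0` if `x`
never burns in phase one). -/
noncomputable def p1time (η : α → ℕ) (Q : Finset α) (x : α) : ℕ :=
  sInf {i : ℕ | x ∉ G.U1 η Q i}

/-- The step at which `x` burns in phase two. -/
noncomputable def p2time (η : α → ℕ) (Q : Finset α) (x : α) : ℕ :=
  sInf {i : ℕ | x ∉ G.U2 η Q i}

/-- Vertices burnt at step `i` of phase one (`B^{(1)}_0 = {s}`). -/
def B1 (η : α → ℕ) (Q : Finset α) : ℕ → Finset α
  | 0 => {G.sink}
  | i + 1 => G.U1 η Q i \ G.U1 η Q (i + 1)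

/-- Vertices burnt at step `i` of phase two (`B^{(2)}_0` = everything burnt in phase
one, including the sink). -/
def B2 (η : α → ℕ) (Q : Finset α) : ℕ → Finset α
  | 0 => Finset.univ \ G.U1lim η Q
  | i + 1 => G.U2 η Q i \ G.U2 η Q (i + 1)

/-- The set `B^{(p)}_{i-1}` of vertices burnt at the step preceding the step at which
`x` burns (in the appropriate phase). -/
noncomputable def prevBurnt (η : α → ℕ) (Q : Finset α) (x : α) : Finset α :=
  if x ∈ G.U1lim η Q then G.B2 η Q (G.p2time η Q x - 1)
  else G.B1 η Q (G.p1time η Q x - 1)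

/-- The set `D = B^{(p)}_0 ∪ ⋯ ∪ B^{(p)}_{i-1}` of vertices burnt strictly before `x`
in the phase in which `x` burns. -/
noncomputable def burntBefore (η : α → ℕ) (Q : Finset α) (x : α) : Finset α :=
  if x ∈ G.U1lim η Q then Finset.univ \ G.U2 η Q (G.p2time η Q x - 1)
  else Finset.univ \ G.U1 η Q (G.p1time η Q x - 1)

/-- `j = η(x) − deg_G(x) + n_x` with `n_x = ∑_{y ∈ D} b_{xy}`. -/
noncomputable def jX (η : α → ℕ) (Q : Finset α) (x : α) : ℕ :=
  η x + G.degIn (G.burntBefore η Q x) x - G.deg x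

/-- The defining property of the edge `e_x` of the burning bijection based on `Q`:
`e_x` has tail `x`, head burnt at the previous step, and exactly `j` smaller elements
of `P_x` under the given edge order `lt x`. -/
def EdgeSpec (lt : α → G.OEdge → G.OEdge → Prop) (η : α → ℕ) (Q : Finset α)
    (x : α) (e : G.OEdge) : Prop :=
  e.1.1 = x ∧ e.1.2.1 ∈ G.prevBurnt η Q x ∧
    {f : G.OEdge | f.1.1 = x ∧ f.1.2.1 ∈ G.prevBurnt η Q x ∧ lt x f e}.ncard =
      G.jX η Q x

/-- The (oriented) spanning tree `t(η) = {e_x : x ∈ V}` assigned to `η` by the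
burning bijection based on `Q`. -/
def treeOf (lt : α → G.OEdge → G.OEdge → Prop) (η : α → ℕ) (Q : Finset α) :
    Set G.OEdge :=
  {e | ∃ x ∈ G.VSet, G.EdgeSpec lt η Q x e}

/-- Forget the orientation of an oriented edge. -/
def undir (e : G.OEdge) : Sym2 α × ℕ := (s(e.1.1, e.1.2.1), e.1.2.2)

/-- Total burning order: phase-one vertices first (at their phase-one step), then
phase-two vertices. -/
noncomputable def burnOrder (η : α → ℕ) (Q : Finset α) (x : α) : ℕ :=
  if x ∈ G.U1lim η Q then Fintype.card α + 1 + G.p2time η Q x else G.p1time η Q x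

/-- Edge multiplicities of the auxiliary graph `G_W^*` (on vertex set `W ∪ {s}`):
`b*_{xy} = b_{xy}` for `x,y ∈ W`; `b*_{xs} = ∑_{z ∉ W} b_{xz}` for `x ∈ Q` and
`b*_{xs} = 0` for `x ∈ W \ Q`. -/
def bstar (Q W : Finset α) (x y : α) : ℕ :=
  if x ∈ W ∧ y ∈ W then G.b x y
  else if x ∈ W ∧ y = G.sink then
    if x ∈ Q then ∑ z ∈ Finset.univ \ W, G.b x z else 0
  else if y ∈ W ∧ x = G.sink then
    if y ∈ Q then ∑ z ∈ Finset.univ \ W, G.b z y else 0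
  else 0

/-- Recurrence in the auxiliary graph `G_W^*`. -/
def StarRecurrent (Q W : Finset α) (ζ : α → ℕ) : Prop :=
  (∀ x ∈ W, ζ x < ∑ y ∈ insert G.sink W, G.bstar Q W x y) ∧
    ∀ F ⊆ W, F.Nonempty → ∃ x ∈ F, (∑ y ∈ F, G.bstar Q W x y) ≤ ζ x

end Graph

end Sandpile

open Sandpile

namespace Sandpile
namespace Graph

section algebra
set_option linter.unusedSectionVars false
variable {α : Type*} [Fintype α] [DecidableEq α] (G : Graph α)

/-- Reduced Laplacian over a general commutative ring. -/
def lapR (R : Type*) [CommRing R] :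
    Matrix {x : α // x ≠ G.sink} {x : α // x ≠ G.sink} R :=
  Matrix.of fun x y =>
    if (x : α) = (y : α) then (G.deg ↑x : R) else -(G.b ↑x ↑y : R)

/-- Extension by zero at the sink. -/
def ext0 {R : Type*} [CommRing R] (v : {x : α // x ≠ G.sink} → R) (x : α) : R :=
  if h : x ≠ G.sink then v ⟨x, h⟩ else 0

lemma ext0_sink {R : Type*} [CommRing R] (v : {x : α // x ≠ G.sink} → R) :
    G.ext0 v G.sink = 0 := by simp [ext0]

lemma ext0_coe {R : Type*} [CommRing R] (v : {x : α // x ≠ G.sink} → R)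
    (x : {x : α // x ≠ G.sink}) : G.ext0 v x = v x := by
  rw [ext0, dif_pos x.2]

lemma lapRed_eq : G.lapRed = G.lapR ℝ := rfl

lemma lapR_map : (G.lapR ℤ).map (Int.castRingHom ℝ) = G.lapRed := by
  ext x y
  simp only [lapR, lapRed, Matrix.map_apply, Matrix.of_apply]
  split_ifs <;> simp

lemma lapR_apply (hl : ∀ x, G.b x x = 0) (R : Type*) [CommRing R]
    (x y : {x : α // x ≠ G.sink}) :
    G.lapR R x y = (if (x : α) = y then (G.deg x : R) else 0) - (G.b x y : R) := by
  simp only [lapR, Matrix.of_apply]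
  split_ifs with h
  · rw [← h, hl]; simp
  · simp

lemma sum_ne_sink {R : Type*} [CommRing R] (f : α → R) (h : f G.sink = 0) :
    ∑ x : {x : α // x ≠ G.sink}, f x = ∑ x, f x := by
  rw [Fintype.sum_eq_add_sum_subtype_ne f G.sink, h, zero_add]

lemma lapR_mulVec (hl : ∀ x, G.b x x = 0) {R : Type*} [CommRing R]
    (v : {x : α // x ≠ G.sink} → R) (x : {x : α // x ≠ G.sink}) :
    (G.lapR R).mulVec v x = ∑ y, (G.b x y : R) * (G.ext0 v x - G.ext0 v y) := by
  have h1 : (G.lapR R).mulVec v x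
      = ∑ y : {x : α // x ≠ G.sink}, ((if x = y then (G.deg x : R) * v y else 0)
          - (G.b x y : R) * G.ext0 v y) := by
    unfold Matrix.mulVec dotProduct
    refine Finset.sum_congr rfl fun y _ => ?_
    change G.lapR R x y * v y = _
    rw [G.lapR_apply hl, ext0_coe]
    by_cases h : x = y
    · subst h; simp; ring
    · have : (x : α) ≠ y := fun h' => h (Subtype.ext h')
      simp [h, this]
  rw [h1, Finset.sum_sub_distrib, Finset.sum_ite_eq,
    G.sum_ne_sink (fun y => (G.b x y : R) * G.ext0 v y) (by simp [ext0_sink])]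
  simp only [Finset.mem_univ, if_true, mul_sub, Finset.sum_sub_distrib, ← Finset.sum_mul,
    ext0_coe]
  simp [deg]

lemma lapRed_posDef (hG : G.IsSandpileGraph) : G.lapRed.PosDef := by
  obtain ⟨hs, hl, hc⟩ := hG
  apply Matrix.PosDef.of_dotProduct_mulVec_pos
  · ext x y
    simp only [Matrix.conjTranspose_apply, lapRed, Matrix.of_apply, star_trivial]
    by_cases h : (x : α) = y
    · simp [h]
    · rw [if_neg h, if_neg (fun h' => h h'.symm), hs]
  · intro v hv
    set e := G.ext0 v with he
    have key : star v ⬝ᵥ (G.lapRed.mulVec v) =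
        (∑ x, ∑ y, (G.b x y : ℝ) * (e x - e y) ^ 2) / 2 := by
      have h1 : star v ⬝ᵥ (G.lapRed.mulVec v)
          = ∑ x, ∑ y, (G.b x y : ℝ) * (e x - e y) * e x := by
        rw [lapRed_eq]
        unfold dotProduct
        rw [← G.sum_ne_sink (fun x => ∑ y, (G.b x y : ℝ) * (e x - e y) * e x)
          (by simp [he, ext0_sink])]
        refine Finset.sum_congr rfl fun x _ => ?_
        rw [G.lapR_mulVec hl, ← Finset.sum_mul, he, ext0_coe]
        simp [mul_comm]
      have h2 : ∑ x, ∑ y, (G.b x y : ℝ) * (e x - e y) * e x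
          = ∑ x, ∑ y, (G.b x y : ℝ) * (e y - e x) * e y := by
        rw [Finset.sum_comm]
        refine Finset.sum_congr rfl fun x _ => Finset.sum_congr rfl fun y _ => ?_
        rw [hs]
      rw [h1, eq_div_iff (by norm_num), mul_two]
      nth_rewrite 2 [h2]
      rw [← Finset.sum_add_distrib]
      refine Finset.sum_congr rfl fun x _ => ?_
      rw [← Finset.sum_add_distrib]
      refine Finset.sum_congr rfl fun y _ => ?_
      ring
    rw [key]
    have hnn : ∀ x ∈ Finset.univ, 0 ≤ ∑ y, (G.b x y : ℝ) * (e x - e y) ^ 2 :=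
      fun x _ => Finset.sum_nonneg fun y _ => by positivity
    refine div_pos (lt_of_le_of_ne (Finset.sum_nonneg hnn) ?_) (by norm_num)
    intro h0
    apply hv
    have h3 := (Finset.sum_eq_zero_iff_of_nonneg hnn).1 h0.symm
    have h4 : ∀ x y, 0 < G.b x y → e x = e y := by
      intro x y hb
      have h5 := (Finset.sum_eq_zero_iff_of_nonneg
        (fun y _ => by positivity)).1 (h3 x (Finset.mem_univ _)) y (Finset.mem_univ _)
      have hb' : (G.b x y : ℝ) ≠ 0 := by exact_mod_cast hb.ne'
      have := (mul_eq_zero.1 h5).resolve_left hb'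
      have := pow_eq_zero_iff (two_ne_zero) |>.1 this
      linarith
    ext x
    have h6 : ∀ y, Relation.ReflTransGen (fun u v => 0 < G.b u v) x y → e x = e y := by
      intro y h
      induction h with
      | refl => rfl
      | tail _ hb ih => rw [ih, h4 _ _ hb]
    have := h6 _ (hc x G.sink)
    rw [he, ext0_coe, ext0_sink] at this
    simpa using this

lemma det_pos (hG : G.IsSandpileGraph) : 0 < G.lapRed.det := (G.lapRed_posDef hG).det_pos

/-- Existence of a nonnegative `h` with `Δ' h = 1`. -/
lemma exists_potential (hG : G.IsSandpileGraph) :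
    ∃ h : {x : α // x ≠ G.sink} → ℝ, (∀ x, 0 ≤ h x) ∧ G.lapRed.mulVec h = fun _ => 1 := by
  have hu : IsUnit G.lapRed.det := (G.det_pos hG).ne'.isUnit
  refine ⟨G.lapRed⁻¹.mulVec (fun _ => 1), ?_, ?_⟩
  swap
  · rw [Matrix.mulVec_mulVec, Matrix.mul_nonsing_inv _ hu, Matrix.one_mulVec]
  set h := G.lapRed⁻¹.mulVec (fun _ => 1) with hh
  have h1 : G.lapRed.mulVec h = fun _ => 1 := by
    rw [hh, Matrix.mulVec_mulVec, Matrix.mul_nonsing_inv _ hu, Matrix.one_mulVec]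
  obtain ⟨m, _, hm⟩ := Finset.exists_min_image Finset.univ (G.ext0 h) ⟨G.sink, Finset.mem_univ _⟩
  have hms : m = G.sink := by
    by_contra hne
    have h2 := congrFun h1 ⟨m, hne⟩
    rw [lapRed_eq, G.lapR_mulVec hG.2.1] at h2
    have : ∑ y, (G.b m y : ℝ) * (G.ext0 h m - G.ext0 h y) ≤ 0 :=
      Finset.sum_nonpos fun y _ => mul_nonpos_of_nonneg_of_nonpos (by positivity)
        (by linarith [hm y (Finset.mem_univ _)])
    simp only at h2
    linarith
  intro x
  have := hm x (Finset.mem_univ _)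
  rwa [hms, ext0_sink, ext0_coe] at this

end algebra
end Graph
end Sandpile
namespace Sandpile

lemma card_quot {n : Type*} [Fintype n] [DecidableEq n] (A : Matrix n n ℤ) (hA : A.det ≠ 0) :
    Nat.card ((n → ℤ) ⧸ LinearMap.range A.mulVecLin) = A.det.natAbs := by
  have hinj : Function.Injective A.mulVecLin := Matrix.mulVec_injective_of_det_ne_zero hA
  have h := Submodule.natAbs_det_equiv (LinearMap.range A.mulVecLin)
    (LinearEquiv.ofInjective A.mulVecLin hinj)
  rw [← h]
  congr 1
  rw [← LinearMap.det_toLin']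
  congr 1

namespace Graph
section count
set_option linter.unusedSectionVars false
variable {α : Type*} [Fintype α] [DecidableEq α] (G : Graph α)

lemma mem_VSet {x : α} : x ∈ G.VSet ↔ x ≠ G.sink := by simp [VSet]

lemma deg_eq_degIn_add (F : Finset α) (x : α) :
    G.deg x = G.degIn F x + ∑ y ∈ Fᶜ, G.b x y := by
  rw [deg, degIn, Finset.sum_add_sum_compl]

/-- A recurrent configuration can not be obtained from a stable one by a nontrivial
firing with positive maximum. -/
lemma no_fire (η η' : α → ℤ) (k : α → ℤ) (hk : k G.sink = 0)
    (hst : ∀ x ≠ G.sink, η x < G.deg x)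
    (hrec : ∀ F ⊆ G.VSet, F.Nonempty → ∃ x ∈ F, (G.degIn F x : ℤ) ≤ η' x)
    (hh : ∀ x ≠ G.sink, η' x = η x - ∑ y, (G.b x y : ℤ) * (k x - k y)) (x : α) : k x ≤ 0 := by
  by_contra hx
  push Not at hx
  obtain ⟨m, _, hm⟩ := Finset.exists_max_image Finset.univ k ⟨x, Finset.mem_univ _⟩
  have hmpos : 0 < k m := lt_of_lt_of_le hx (hm x (Finset.mem_univ _))
  obtain ⟨z, hz, hz'⟩ := hrec (Finset.univ.filter fun y => k y = k m)
    (by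
      intro y hy
      rw [mem_VSet]
      rintro rfl
      simp only [Finset.mem_filter, hk] at hy
      omega) ⟨m, by simp⟩
  set F := Finset.univ.filter fun y => k y = k m with hF
  have hzF : k z = k m := by simpa [hF] using hz
  have hzs : z ≠ G.sink := by
    rintro rfl
    omega
  rw [hh z hzs] at hz'
  have h1 := hst z hzs
  have h2 : (∑ y ∈ Fᶜ, (G.b z y : ℤ)) ≤ ∑ y, (G.b z y : ℤ) * (k z - k y) := by
    rw [← Finset.sum_add_sum_compl F (fun y => (G.b z y : ℤ) * (k z - k y))]
    have h3 : 0 ≤ ∑ y ∈ F, (G.b z y : ℤ) * (k z - k y) :=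
      Finset.sum_nonneg fun y _ => mul_nonneg (by positivity)
        (by have := hm y (Finset.mem_univ _); omega)
    have h4 : (∑ y ∈ Fᶜ, (G.b z y : ℤ)) ≤ ∑ y ∈ Fᶜ, (G.b z y : ℤ) * (k z - k y) := by
      refine Finset.sum_le_sum fun y hy => ?_
      have h5 : k y ≠ k m := by simpa [hF] using hy
      have := hm y (Finset.mem_univ _)
      have h6 : 1 ≤ k z - k y := by omega
      nlinarith [(Nat.cast_nonneg (G.b z y) : (0 : ℤ) ≤ _)]
    linarith
  have h7 : (G.deg z : ℤ) = G.degIn F z + ∑ y ∈ Fᶜ, (G.b z y : ℤ) := by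
    exact_mod_cast G.deg_eq_degIn_add F z
  linarith

lemma exists_rec (hG : G.IsSandpileGraph) (σ : {x : α // x ≠ G.sink} → ℤ) :
    ∃ (η : α → ℕ) (k : {x : α // x ≠ G.sink} → ℤ), η G.sink = 0 ∧ G.Recurrent η ∧
      ∀ x : {x : α // x ≠ G.sink}, (η (x : α) : ℤ) = σ x + (G.lapR ℤ).mulVec k x := by
  obtain ⟨h, hh0, hh1⟩ := G.exists_potential hG
  have hdet : (G.lapR ℤ).det ≠ 0 := by
    intro h0
    have := G.det_pos hG
    rw [← lapR_map, ← RingHom.mapMatrix_apply, ← RingHom.map_det, h0] at this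
    simp at this
  let St : ({x : α // x ≠ G.sink} → ℤ) → Prop := fun k =>
    ∀ x, σ x + (G.lapR ℤ).mulVec k x < G.deg x
  -- pairing identity
  have hpair : ∀ k : {x : α // x ≠ G.sink} → ℤ,
      ∑ x, h x * (((G.lapR ℤ).mulVec k x : ℤ) : ℝ) = ((∑ x, k x : ℤ) : ℝ) := by
    intro k
    have e1 : ∀ x, (((G.lapR ℤ).mulVec k x : ℤ) : ℝ)
        = G.lapRed.mulVec (fun y => (k y : ℝ)) x := by
      intro x
      rw [← lapR_map]
      simp [Matrix.mulVec, dotProduct]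
    have e2 : G.lapRed.transpose = G.lapRed := by
      have := (G.lapRed_posDef hG).1
      rwa [Matrix.IsHermitian, Matrix.conjTranspose_eq_transpose_of_trivial] at this
    calc ∑ x, h x * (((G.lapR ℤ).mulVec k x : ℤ) : ℝ)
        = h ⬝ᵥ G.lapRed.mulVec (fun y => (k y : ℝ)) := by
          simp only [e1]; rfl
      _ = (G.lapRed.mulVec h) ⬝ᵥ (fun y => (k y : ℝ)) := by
          rw [Matrix.dotProduct_mulVec, ← Matrix.mulVec_transpose, e2]
      _ = _ := by
          rw [hh1]; simp [dotProduct]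
  have hbdd : ∃ b : ℤ, ∀ z : ℤ, (∃ k, St k ∧ ∑ x, k x = z) → z ≤ b := by
    refine ⟨⌈∑ x, h x * ((G.deg (x : α) : ℝ) - σ x)⌉, ?_⟩
    rintro z ⟨k, hk, rfl⟩
    have : ((∑ x, k x : ℤ) : ℝ) ≤ ∑ x, h x * ((G.deg (x : α) : ℝ) - σ x) := by
      rw [← hpair]
      refine Finset.sum_le_sum fun x _ => mul_le_mul_of_nonneg_left ?_ (hh0 x)
      have h1 := (hk x).le
      have h2 : ((σ x : ℤ) : ℝ) + (((G.lapR ℤ).mulVec k x : ℤ) : ℝ) ≤ (G.deg (x : α) : ℝ) := by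
        exact_mod_cast h1
      linarith
    have h3 := this.trans (Int.le_ceil _)
    exact_mod_cast h3
  have hinh : ∃ z : ℤ, ∃ k, St k ∧ ∑ x, k x = z := by
    set N : ℤ := ∑ x, |σ x| + 1 with hN
    set d := (G.lapR ℤ).det with hd
    refine ⟨_, fun y => ∑ w, (G.lapR ℤ).adjugate y w * (-(N * d)), ?_, rfl⟩
    intro x
    have h1 : (G.lapR ℤ).mulVec (fun y => ∑ w, (G.lapR ℤ).adjugate y w * (-(N * d))) x
        = -(N * d) * d := by
      have : (fun y => ∑ w, (G.lapR ℤ).adjugate y w * (-(N * d)))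
          = (G.lapR ℤ).adjugate.mulVec (fun _ => -(N * d)) := by
        ext y; rfl
      rw [this, Matrix.mulVec_mulVec, Matrix.mul_adjugate, Matrix.smul_mulVec, Matrix.one_mulVec]
      simp [← hd]; ring
    rw [h1]
    have h2 : |σ x| ≤ ∑ x, |σ x| :=
      Finset.single_le_sum (f := fun x => |σ x|) (fun i _ => abs_nonneg _) (Finset.mem_univ x)
    have h3 : 1 ≤ d * d := by
      have : 0 < d * d := mul_self_pos.2 hdet
      omega
    have h4 := le_abs_self (σ x)
    have h5 : 0 ≤ N := by have := abs_nonneg (σ x); omega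
    have h6 : (0 : ℤ) ≤ G.deg (x : α) := by positivity
    nlinarith
  obtain ⟨z, ⟨k, hk, rfl⟩, hmax⟩ := Int.exists_greatest_of_bdd hbdd hinh
  let τ : α → ℤ := G.ext0 (fun x => σ x + (G.lapR ℤ).mulVec k x)
  have hample : ∀ F ⊆ G.VSet, F.Nonempty → ∃ x ∈ F, (G.degIn F x : ℤ) ≤ τ x := by
    intro F hF hne
    by_contra hcon
    push Not at hcon
    let k' : {x : α // x ≠ G.sink} → ℤ := fun x => if (x : α) ∈ F then 1 else 0
    have hsF : G.sink ∉ F := fun h => (G.mem_VSet.1 (hF h)) rfl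
    have hk' : ∀ y, G.ext0 k' y = if y ∈ F then 1 else 0 := by
      intro y
      by_cases hy : y = G.sink
      · subst hy; simp [ext0_sink, hsF]
      · simp [ext0, hy, k']
    have hSt : St (k + k') := by
      intro x
      rw [Matrix.mulVec_add, Pi.add_apply, G.lapR_mulVec hG.2.1 k']
      simp only [hk']
      by_cases hx : (x : α) ∈ F
      · have h1 := hcon x hx
        simp only [τ] at h1
        rw [ext0_coe] at h1
        have h2 : ∑ y, (G.b x y : ℤ) * ((if (x : α) ∈ F then 1 else 0) - if y ∈ F then 1 else 0)
            = ∑ y ∈ Fᶜ, (G.b x y : ℤ) := by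
          rw [← Finset.sum_add_sum_compl F, Finset.sum_eq_zero, zero_add]
          · refine Finset.sum_congr rfl fun y hy => ?_
            simp [hx, Finset.mem_compl.1 hy]
          · intro y hy
            simp [hx, hy]
        have h7 : (G.deg x : ℤ) = G.degIn F x + ∑ y ∈ Fᶜ, (G.b x y : ℤ) := by
          exact_mod_cast G.deg_eq_degIn_add F x
        rw [h2]; linarith
      · have h1 := hk x
        have h2 : ∑ y, (G.b x y : ℤ) * ((if (x : α) ∈ F then 1 else 0) - if y ∈ F then 1 else 0)
            ≤ 0 := by
          refine Finset.sum_nonpos fun y _ => mul_nonpos_of_nonneg_of_nonpos (by positivity) ?_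
          simp only [hx, if_false]
          split_ifs <;> simp
        linarith
    have h1 := hmax _ ⟨k + k', hSt, rfl⟩
    have h2 : 0 < ∑ x, k' x := by
      obtain ⟨f, hf⟩ := hne
      refine Finset.sum_pos' (fun x _ => ?_) ⟨⟨f, fun h => hsF (h ▸ hf)⟩, Finset.mem_univ _, ?_⟩
      · simp only [k']; split_ifs <;> simp
      · simp [k', hf]
    simp only [Pi.add_apply, Finset.sum_add_distrib] at h1
    linarith
  have hτ0 : ∀ x ≠ G.sink, 0 ≤ τ x := by
    intro x hx
    obtain ⟨y, hy, hy'⟩ := hample {x} (by simpa [mem_VSet] using hx) ⟨x, by simp⟩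
    rw [Finset.mem_singleton] at hy
    subst hy
    exact le_trans (by positivity) hy'
  have hτs : τ G.sink = 0 := ext0_sink _ _
  have hcast : ∀ x, ((τ x).toNat : ℤ) = τ x := by
    intro x
    rw [Int.toNat_of_nonneg]
    by_cases hx : x = G.sink
    · rw [hx, hτs]
    · exact hτ0 x hx
  refine ⟨fun x => (τ x).toNat, k, by simp [hτs], ⟨?_, ?_⟩, ?_⟩
  · intro x hx
    have h1 := hk ⟨x, G.mem_VSet.1 hx⟩
    have h2 : τ x = _ := G.ext0_coe (fun x => σ x + (G.lapR ℤ).mulVec k x) ⟨x, G.mem_VSet.1 hx⟩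
    have h3 := hcast x
    rw [← h2] at h1
    simp only at h1 ⊢
    omega
  · intro F hF hne
    obtain ⟨x, hx, hx'⟩ := hample F hF hne
    refine ⟨x, hx, ?_⟩
    have h3 := hcast x
    simp only
    omega
  · intro x
    simp only
    rw [hcast]
    exact G.ext0_coe _ x

lemma card_recurrent (hG : G.IsSandpileGraph) :
    (Nat.card {η : α → ℕ // η G.sink = 0 ∧ G.Recurrent η} : ℝ) = G.lapRed.det := by
  have hdetR : G.lapRed.det = (((G.lapR ℤ).det : ℤ) : ℝ) := by
    rw [← lapR_map, ← RingHom.mapMatrix_apply, ← RingHom.map_det]; rfl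
  have hpos : 0 < (G.lapR ℤ).det := by
    have := G.det_pos hG
    rw [hdetR] at this
    exact_mod_cast this
  have hc := card_quot (G.lapR ℤ) hpos.ne'
  have hnat : Nat.card {η : α → ℕ // η G.sink = 0 ∧ G.Recurrent η} = (G.lapR ℤ).det.natAbs := by
    rw [← hc]
    let f : {η : α → ℕ // η G.sink = 0 ∧ G.Recurrent η} →
        (({x : α // x ≠ G.sink} → ℤ) ⧸ LinearMap.range (G.lapR ℤ).mulVecLin) :=
      fun η => Submodule.Quotient.mk (fun x => (η.1 x : ℤ))
    refine Nat.card_eq_of_bijective f ⟨?_, ?_⟩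
    · intro η η' h
      have h1 := (Submodule.Quotient.eq _).1 h
      obtain ⟨k, hk⟩ := h1
      have hk' : ∀ x : {x : α // x ≠ G.sink},
          ∑ y, (G.b x y : ℤ) * (G.ext0 k x - G.ext0 k y) = (η.1 x : ℤ) - η'.1 x := by
        intro x
        rw [← G.lapR_mulVec hG.2.1 k x]
        exact congrFun hk x
      have hz : ∀ x, G.ext0 k x = 0 := by
        intro x
        apply le_antisymm
        · refine G.no_fire (fun x => (η.1 x : ℤ)) (fun x => (η'.1 x : ℤ)) _ (G.ext0_sink k) ?_ ?_ ?_ x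
          · intro x hx; exact_mod_cast η.2.2.1 x (G.mem_VSet.2 hx)
          · intro F hF hne
            obtain ⟨y, hy, hy'⟩ := η'.2.2.2 F hF hne
            exact ⟨y, hy, by exact_mod_cast hy'⟩
          · intro x hx
            have := hk' ⟨x, hx⟩
            simp only at this ⊢
            linarith
        · have := G.no_fire (fun x => (η'.1 x : ℤ)) (fun x => (η.1 x : ℤ)) (fun x => - G.ext0 k x)
            (by simp [ext0_sink]) ?_ ?_ ?_ x
          · simpa using this
          · intro x hx; exact_mod_cast η'.2.2.1 x (G.mem_VSet.2 hx)
          · intro F hF hne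
            obtain ⟨y, hy, hy'⟩ := η.2.2.2 F hF hne
            exact ⟨y, hy, by exact_mod_cast hy'⟩
          · intro x hx
            have := hk' ⟨x, hx⟩
            have e : ∑ y, (G.b x y : ℤ) * (-G.ext0 k x - -G.ext0 k y)
              = - ∑ y, (G.b x y : ℤ) * (G.ext0 k x - G.ext0 k y) := by
              rw [← Finset.sum_neg_distrib]
              exact Finset.sum_congr rfl fun y _ => by ring
            rw [e]
            simp only at this ⊢
            linarith
      apply Subtype.ext
      funext x
      by_cases hx : x = G.sink
      · rw [hx, η.2.1, η'.2.1]
      · have := hk' ⟨x, hx⟩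
        simp only [hz, sub_zero, mul_zero, Finset.sum_const_zero] at this
        omega
    · intro q
      induction q using Submodule.Quotient.induction_on with
      | H σ =>
        obtain ⟨η, k, h0, hr, hη⟩ := G.exists_rec hG σ
        refine ⟨⟨η, h0, hr⟩, ?_⟩
        refine (Submodule.Quotient.eq _).2 ⟨k, ?_⟩
        ext x
        simp [hη]
  rw [hnat, hdetR]
  have : (((G.lapR ℤ).det.natAbs : ℤ)) = (G.lapR ℤ).det := by omega
  rw [← Int.cast_natCast, this]

end count
end Graph
end Sandpile
namespace Sandpile
namespace Graph
section removal
set_option linter.unusedSectionVars false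
variable {α : Type*} [Fintype α] [DecidableEq α] (G : Graph α)

/-- Signed incidence matrix. -/
noncomputable def incid (E : Finset G.OEdge) : Matrix {x : α // x ≠ G.sink} E ℝ :=
  Matrix.of fun v e => (if (v : α) = e.1.1.1 then 1 else 0) - (if (v : α) = e.1.1.2.1 then 1 else 0)

lemma sum_ite_ext0 (g : {x : α // x ≠ G.sink} → ℝ) (t : α) :
    ∑ v : {x : α // x ≠ G.sink}, (if (v : α) = t then 1 else 0) * g v = G.ext0 g t := by
  by_cases ht : t = G.sink
  · subst ht
    rw [ext0_sink]
    exact Finset.sum_eq_zero fun v _ => by simp [v.2]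
  · rw [Finset.sum_eq_single ⟨t, ht⟩]
    · simp [ext0, ht]
    · intro v _ hv
      have : (v : α) ≠ t := fun h => hv (Subtype.ext h)
      simp [this]
    · simp

lemma sum_incid (E : Finset G.OEdge) (e : E) (g : {x : α // x ≠ G.sink} → ℝ) :
    ∑ v : {x : α // x ≠ G.sink}, G.incid E v e * g v
      = G.ext0 g e.1.1.1 - G.ext0 g e.1.1.2.1 := by
  simp only [incid, Matrix.of_apply, sub_mul, Finset.sum_sub_distrib, sum_ite_ext0]

/-- Number of edges of `E` with given tail and head. -/
noncomputable def nE (E : Finset G.OEdge) (x y : α) : ℕ :=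
  (E.filter fun e => e.1.1 = x ∧ e.1.2.1 = y).card

lemma sum_nE (E : Finset G.OEdge) (f : α → α → ℝ) :
    ∑ e ∈ E, f e.1.1 e.1.2.1 = ∑ x, ∑ y, (G.nE E x y : ℝ) * f x y := by
  have h1 : ∀ x y, (G.nE E x y : ℝ) * f x y
      = ∑ e ∈ E, if e.1.1 = x then (if e.1.2.1 = y then f x y else 0) else 0 := by
    intro x y
    rw [nE, Finset.card_filter]
    push_cast
    rw [Finset.sum_mul]
    refine Finset.sum_congr rfl fun e _ => ?_
    by_cases h1 : e.1.1 = x <;> by_cases h2 : e.1.2.1 = y <;> simp [h1, h2]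
  simp only [h1]
  have h2 : ∀ x, (∑ y, ∑ e ∈ E, if e.1.1 = x then (if e.1.2.1 = y then f x y else 0) else 0)
      = ∑ e ∈ E, if e.1.1 = x then f x e.1.2.1 else 0 := by
    intro x
    rw [Finset.sum_comm]
    refine Finset.sum_congr rfl fun e _ => ?_
    by_cases h1 : e.1.1 = x <;> simp [h1]
  simp only [h2]
  rw [Finset.sum_comm]
  refine Finset.sum_congr rfl fun e _ => ?_
  simp

/-- The graph with the same sink and new multiplicities. -/
abbrev withB (b' : α → α → ℕ) : Graph α := ⟨G.sink, b'⟩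

lemma lapRed_withB (hl : ∀ x, G.b x x = 0) (b' : α → α → ℕ) (E : Finset G.OEdge)
    (hE : ∀ x y, G.b x y = b' x y + G.nE E x y + G.nE E y x) :
    (G.withB b').lapRed = G.lapRed + (- G.incid E) * (G.incid E).transpose := by
  have hl' : ∀ x, (G.withB b').b x x = 0 := by
    intro x
    have h1 := hE x x
    rw [hl] at h1
    show b' x x = 0
    omega
  refine Matrix.ext fun (u v : {x : α // x ≠ G.sink}) => ?_
  change (G.withB b').lapR ℝ u v = G.lapR ℝ u v + ((- G.incid E) * (G.incid E).transpose) u v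
  rw [(G.withB b').lapR_apply hl', G.lapR_apply hl]
  rw [Matrix.neg_mul, Matrix.neg_apply]
  have h1 : (G.incid E * (G.incid E).transpose) u v
      = ∑ e ∈ E, (((if (u : α) = e.1.1 then 1 else 0) - (if (u : α) = e.1.2.1 then 1 else 0)) *
        ((if (v : α) = e.1.1 then 1 else 0) - (if (v : α) = e.1.2.1 then 1 else 0)) : ℝ) := by
    rw [← Finset.sum_coe_sort]
    rfl
  rw [h1, G.sum_nE E (fun x y => (((if (u : α) = x then 1 else 0) - (if (u : α) = y then 1 else 0)) *
        ((if (v : α) = x then 1 else 0) - (if (v : α) = y then 1 else 0)) : ℝ))]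
  have h2 : ∑ x, ∑ y, (G.nE E x y : ℝ) *
      (((if (u : α) = x then 1 else 0) - (if (u : α) = y then 1 else 0)) *
        ((if (v : α) = x then 1 else 0) - (if (v : α) = y then 1 else 0)) : ℝ)
      = ∑ y, ((G.nE E u y : ℝ) + G.nE E y u) *
          ((if (u : α) = v then 1 else 0) - (if (v : α) = y then 1 else 0)) := by
    have a1 : ∀ x y, (G.nE E x y : ℝ) *
      (((if (u : α) = x then 1 else 0) - (if (u : α) = y then 1 else 0)) *
        ((if (v : α) = x then 1 else 0) - (if (v : α) = y then 1 else 0)) : ℝ)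
      = (if (u : α) = x then (G.nE E x y : ℝ) * ((if (v : α) = x then 1 else 0) - (if (v : α) = y then 1 else 0)) else 0)
       - (if (u : α) = y then (G.nE E x y : ℝ) * ((if (v : α) = x then 1 else 0) - (if (v : α) = y then 1 else 0)) else 0) := by
      intro x y
      generalize (((if (v : α) = x then 1 else 0) - (if (v : α) = y then 1 else 0)) : ℝ) = c
      split_ifs <;> ring
    simp only [a1, Finset.sum_sub_distrib]
    rw [Finset.sum_comm]
    simp only [Finset.sum_ite_eq, Finset.mem_univ, if_true]
    rw [← Finset.sum_sub_distrib]
    refine Finset.sum_congr rfl fun y _ => ?_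
    have : ((v : α) = u) ↔ ((u : α) = v) := eq_comm
    simp only [this]
    ring
  rw [h2]
  have hdeg : (G.deg u : ℝ) = (G.withB b').deg u + ∑ y, ((G.nE E u y : ℝ) + G.nE E y u) := by
    simp only [deg]
    push_cast
    rw [← Finset.sum_add_distrib]
    refine Finset.sum_congr rfl fun y _ => ?_
    rw [hE]
    push_cast
    ring
  have hb : (G.b u v : ℝ) = (G.withB b').b u v + ((G.nE E u v : ℝ) + G.nE E v u) := by
    rw [hE]
    push_cast
    ring
  simp only [mul_sub, Finset.sum_sub_distrib, ← Finset.sum_mul, hdeg, hb]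
  simp only [mul_ite, mul_one, mul_zero, Finset.sum_ite_eq, Finset.mem_univ, if_true]
  split_ifs <;> ring

lemma det_removal (hG : G.IsSandpileGraph) (b' : α → α → ℕ) (E : Finset G.OEdge)
    (hE : ∀ x y, G.b x y = b' x y + G.nE E x y + G.nE E y x) :
    (G.withB b').lapRed.det =
      G.lapRed.det * Matrix.det (Matrix.of fun e f : ↥E => G.Kmat e f) := by
  have hu : IsUnit G.lapRed.det := (G.det_pos hG).ne'.isUnit
  have h1 := G.lapRed_withB hG.2.1 b' E hE
  have h2 : (G.withB b').lapRed.det =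
      (G.lapRed + (- G.incid E) * (G.incid E).transpose).det := congrArg Matrix.det h1
  rw [h2, Matrix.det_add_mul _ _ hu]
  congr 2
  ext e f
  rw [Matrix.mul_neg, Matrix.add_apply, Matrix.neg_apply, Matrix.of_apply, Kmat, Matrix.one_apply]
  have h3 : ((G.incid E).transpose * G.lapRed⁻¹ * G.incid E) e f
      = ∑ u, G.incid E u e * ∑ v, G.incid E v f * G.lapRed⁻¹ u v := by
    rw [Matrix.mul_assoc, Matrix.mul_apply]
    refine Finset.sum_congr rfl fun u _ => ?_
    rw [Matrix.transpose_apply, Matrix.mul_apply]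
    congr 1
    exact Finset.sum_congr rfl fun v _ => mul_comm _ _
  have h4 : ∀ x y, G.Hfun x y = G.ext0 (fun u => G.ext0 (fun v => G.lapRed⁻¹ u v) y) x := by
    intro x y
    simp only [Hfun, ext0]
    by_cases hx : x = G.sink <;> by_cases hy : y = G.sink <;> simp [hx, hy]
  have h5 : ∀ (g g' : {x : α // x ≠ G.sink} → ℝ) x,
      G.ext0 (fun u => g u - g' u) x = G.ext0 g x - G.ext0 g' x := by
    intro g g' x
    simp only [ext0]
    split_ifs <;> simp
  rw [h3]
  simp only [sum_incid, h5, h4]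
  have : (e = f) ↔ ((e : G.OEdge) = f) := Subtype.ext_iff
  by_cases hef : e = f
  · subst hef
    simp only [if_true]
    ring
  · have h' : ¬ (e : G.OEdge) = f := fun h => hef (Subtype.ext h)
    simp only [hef, h', if_false]
    ring

end removal
end Graph
end Sandpile
namespace Sandpile
namespace Graph
section burning
set_option linter.unusedSectionVars false
variable {α : Type*} [Fintype α] [DecidableEq α] (G : Graph α)

lemma degIn_mono {F F' : Finset α} (h : F ⊆ F') (x : α) : G.degIn F x ≤ G.degIn F' x :=
  Finset.sum_le_sum_of_subset h

lemma degIn_lt_of {F F' : Finset α} (h : F ⊆ F') (x y : α) (hy : y ∈ F') (hy' : y ∉ F)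
    (hb : 0 < G.b x y) : G.degIn F x < G.degIn F' x :=
  Finset.sum_lt_sum_of_subset h hy hy' hb (fun _ _ _ => Nat.zero_le _)

lemma degIn_univ (x : α) : G.degIn Finset.univ x = G.deg x := rfl

/-- `t` is a burning time function for `η`. -/
def IsTime (η : α → ℕ) (t : α → ℕ) : Prop :=
  t G.sink = 0 ∧ (∀ x ≠ G.sink, 0 < t x) ∧
    ∀ x ≠ G.sink, G.degIn (Finset.univ.filter fun y => t x ≤ t y) x ≤ η x

lemma exists_time (η : α → ℕ) (h : ∀ F ⊆ G.VSet, F.Nonempty → G.AmpleFor η F) :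
    ∃ t, G.IsTime η t := by
  have key : ∀ n : ℕ, ∀ U ⊆ G.VSet, U.card = n → ∃ t : α → ℕ, (∀ y, y ∉ U → t y = 0) ∧
      (∀ y ∈ U, 0 < t y) ∧
      ∀ x ∈ U, G.degIn (Finset.univ.filter fun y => t x ≤ t y) x ≤ η x := by
    intro n
    induction n with
    | zero =>
      intro U _ hc
      rw [Finset.card_eq_zero] at hc
      subst hc
      exact ⟨fun _ => 0, by simp, by simp, by simp⟩
    | succ n ih =>
      intro U hU hc
      obtain ⟨x, hx, hx'⟩ := h U hU (Finset.card_pos.1 (by omega))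
      obtain ⟨t', h1, h2, h3⟩ := ih (U.erase x) ((Finset.erase_subset _ _).trans hU)
        (by rw [Finset.card_erase_of_mem hx]; omega)
      refine ⟨fun y => if y = x then 1 else if y ∈ U then t' y + 1 else 0, ?_, ?_, ?_⟩
      · intro y hy
        have : y ≠ x := fun h => hy (h ▸ hx)
        simp [this, hy]
      · intro y hy
        by_cases hyx : y = x <;> simp [hyx, hy]
      · intro z hz
        by_cases hzx : z = x
        · subst hzx
          refine le_trans (G.degIn_mono ?_ _) hx'
          intro y hy
          simp only [Finset.mem_filter, Finset.mem_univ, true_and, if_true] at hy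
          by_contra hyU
          have : y ≠ z := fun h => hyU (h ▸ hz)
          simp [this, hyU] at hy
        · have hzU : z ∈ U.erase x := Finset.mem_erase.2 ⟨hzx, hz⟩
          refine le_trans (G.degIn_mono ?_ _) (h3 z hzU)
          intro y hy
          have hpos := h2 z hzU
          simp only [Finset.mem_filter, Finset.mem_univ, true_and, hzx, hz, if_true, if_false] at hy ⊢
          split_ifs at hy <;> omega
  obtain ⟨t, h1, h2, h3⟩ := key _ G.VSet (Finset.Subset.refl _) rfl
  refine ⟨t, h1 _ (by simp [mem_VSet]), fun x hx => h2 x (G.mem_VSet.2 hx),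
    fun x hx => h3 x (G.mem_VSet.2 hx)⟩

lemma ample_of_time {η t : α → ℕ} (ht : G.IsTime η t) :
    ∀ F ⊆ G.VSet, F.Nonempty → G.AmpleFor η F := by
  intro F hF hne
  obtain ⟨x, hx, hm⟩ := Finset.exists_min_image F t hne
  refine ⟨x, hx, le_trans (G.degIn_mono ?_ _) (ht.2.2 x (G.mem_VSet.1 (hF hx)))⟩
  intro y hy
  simp [hm y hy]

/-- The set which can be burnt without burning `w`. -/
noncomputable def Avoid (M : α → ℕ) (w : α) : Finset α :=
  Finset.univ.filter fun x => ∀ B : Finset α, G.sink ∈ B →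
    (∀ y, y ≠ w → G.degIn Bᶜ y ≤ M y → y ∈ B) → x ∈ B

lemma sink_mem_avoid (M : α → ℕ) (w : α) : G.sink ∈ G.Avoid M w := by
  simp only [Avoid, Finset.mem_filter, Finset.mem_univ, true_and]
  exact fun B h _ => h

lemma avoid_least (M : α → ℕ) (w : α) (B : Finset α) (h1 : G.sink ∈ B)
    (h2 : ∀ y, y ≠ w → G.degIn Bᶜ y ≤ M y → y ∈ B) : G.Avoid M w ⊆ B := by
  intro x hx
  simp only [Avoid, Finset.mem_filter, Finset.mem_univ, true_and] at hx
  exact hx B h1 h2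

lemma avoid_closed (M : α → ℕ) (w y : α) (hy : y ≠ w) (h : G.degIn (G.Avoid M w)ᶜ y ≤ M y) :
    y ∈ G.Avoid M w := by
  simp only [Avoid, Finset.mem_filter, Finset.mem_univ, true_and]
  intro B h1 h2
  refine h2 y hy (le_trans (G.degIn_mono ?_ _) h)
  exact Finset.compl_subset_compl.2 (G.avoid_least M w B h1 h2)

lemma self_notMem_avoid (M : α → ℕ) (w : α) (hw : w ≠ G.sink) : w ∉ G.Avoid M w := by
  intro h
  have := G.avoid_least M w (Finset.univ.erase w) (by simp [hw.symm])
    (fun y hy _ => by simp [hy]) h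
  simp at this

lemma time_le_mem_avoid {η t M : α → ℕ} (ht : G.IsTime η t) (hM : ∀ x ≠ G.sink, η x ≤ M x) (w : α) :
    ∀ y, y ≠ w → t y ≤ t w → y ∈ G.Avoid M w := by
  have key : ∀ n y, t y = n → y ≠ w → t y ≤ t w → y ∈ G.Avoid M w := by
    intro n
    induction n using Nat.strong_induction_on with
    | _ n ih =>
      intro y hn hyw hle
      by_cases hys : y = G.sink
      · rw [hys]; exact G.sink_mem_avoid M w
      refine G.avoid_closed M w y hyw (le_trans (G.degIn_mono ?_ _)
        ((ht.2.2 y hys).trans (hM y hys)))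
      intro z hz
      simp only [Finset.mem_filter, Finset.mem_univ, true_and]
      by_contra hlt
      push Not at hlt
      refine Finset.mem_compl.1 hz (ih (t z) (by omega) z rfl ?_ (by omega))
      rintro rfl
      omega
  exact fun y => key _ y rfl

/-- The maximal extension of `ξ`. -/
noncomputable def maxExt (W : Finset α) (ξ : α → ℕ) : α → ℕ :=
  fun x => if x ∈ W then ξ x else G.deg x - 1

lemma le_maxExt {W : Finset α} {ξ η : α → ℕ} (hη : G.Stable η) (he : EqOn η ξ W) :
    ∀ x ≠ G.sink, η x ≤ G.maxExt W ξ x := by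
  intro x hx
  rw [maxExt]
  split_ifs with h
  · exact (he x h).le
  · have := hη x (G.mem_VSet.2 hx); omega

lemma maxExt_recurrent {W : Finset α} {ξ η : α → ℕ} (hη : G.Recurrent η) (he : EqOn η ξ W) :
    G.Recurrent (G.maxExt W ξ) := by
  constructor
  · intro x hx
    have := hη.1 x hx
    rw [maxExt]
    split_ifs with h
    · rwa [← he x h]
    · omega
  · intro F hF hne
    obtain ⟨x, hx, hx'⟩ := hη.2 F hF hne
    exact ⟨x, hx, hx'.trans (G.le_maxExt hη.1 he x (G.mem_VSet.1 (hF hx)))⟩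

lemma tight {W : Finset α} {ξ : α → ℕ} (hWs : G.sink ∉ W) (hmin : G.Minimal W ξ) (w : α)
    (hw : w ∈ W) : ξ w = G.degIn (G.Avoid (G.maxExt W ξ) w)ᶜ w := by
  obtain ⟨⟨η, hη, he⟩, hmin⟩ := hmin
  set M := G.maxExt W ξ with hMdef
  have hM : G.Recurrent M := G.maxExt_recurrent hη he
  have hMw : M w = ξ w := by simp [hMdef, maxExt, hw]
  have hME : EqOn M ξ W := fun x hx => by simp [hMdef, maxExt, hx]
  have hws : w ≠ G.sink := fun h => hWs (h ▸ hw)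
  apply le_antisymm
  · by_contra hlt
    push Not at hlt
    refine hmin M hM hME w hw ⟨by omega, ?_, ?_⟩
    · intro x hx
      have := hM.1 x hx
      rw [SubOne]
      split_ifs <;> omega
    · intro F hF hne
      by_cases hex : ∃ x ∈ F, x ≠ w ∧ G.degIn F x ≤ M x
      · obtain ⟨x, hx, hxw, hx'⟩ := hex
        exact ⟨x, hx, by simpa [SubOne, hxw] using hx'⟩
      push Not at hex
      have hsub : G.Avoid M w ⊆ Fᶜ := by
        apply G.avoid_least
        · rw [Finset.mem_compl]
          exact fun h => (G.mem_VSet.1 (hF h)) rfl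
        · intro y hyw hy
          rw [Finset.mem_compl]
          intro hyF
          rw [compl_compl] at hy
          exact absurd hy (not_le.2 (hex y hyF hyw))
      have hF' : F ⊆ (G.Avoid M w)ᶜ := by
        rwa [← Finset.compl_subset_compl, compl_compl]
      obtain ⟨x, hx, hx'⟩ := hM.2 F hF hne
      have hxw : x = w := by
        by_contra hne
        exact absurd hx' (not_le.2 (hex x hx hne))
      subst hxw
      refine ⟨x, hx, ?_⟩
      have := G.degIn_mono hF' x
      simp only [SubOne, if_true]
      omega
  · obtain ⟨x, hx, hx'⟩ := hM.2 (G.Avoid M w)ᶜ (by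
      intro y hy
      rw [mem_VSet]
      rintro rfl
      exact Finset.mem_compl.1 hy (G.sink_mem_avoid M w))
      ⟨w, Finset.mem_compl.2 (G.self_notMem_avoid M w hws)⟩
    have hxw : x = w := by
      by_contra hne
      exact Finset.mem_compl.1 hx (G.avoid_closed M w x hne hx')
    subst hxw
    rwa [← hMw]

end burning
end Graph
end Sandpile
namespace Sandpile
namespace Graph
section structural
set_option linter.unusedSectionVars false
variable {α : Type*} [Fintype α] [DecidableEq α] (G : Graph α)

/-- The combinatorial data extracted from a minimal configuration. -/
structure Str (W : Finset α) (ξ : α → ℕ) (D : α → α → Prop) (q : α → α) (r : α → ℕ) : Prop where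
  q_sink : q G.sink = G.sink
  r_sink : r G.sink = 0
  D_q : ∀ w ∈ W, D w (q w)
  D_mem : ∀ w y, D w y → w ∈ W
  D_b : ∀ w y, D w y → 0 < G.b w y
  D_r : ∀ w y, D w y → r y < r w
  q_out : ∀ c, c ∉ W → q c = G.sink ∨ (q c ∈ W ∧ r (q c) < r c)
  q_adj : ∀ c c', c ∉ W → c' ∉ W → 0 < G.b c c' → q c = q c'
  r_adj : ∀ c c', c ∉ W → c' ∉ W → 0 < G.b c c' → r c = r c'
  cases : ∀ w ∈ W, ∀ y, 0 < G.b w y → D w y ∨ (y ∈ W ∧ D y w) ∨ (y ∉ W ∧ q y = w)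
  xi : ∀ w ∈ W, ξ w = G.degIn (Finset.univ.filter fun y => ¬ D w y) w
  time : ∀ η, G.Recurrent η → EqOn η ξ W → ∃ t, G.IsTime η t ∧ ∀ w y, D w y → t y < t w

lemma exists_str (hG : G.IsSandpileGraph) {W : Finset α} {ξ : α → ℕ} (hWs : G.sink ∉ W)
    (hstable : ∀ x ∈ W, ξ x < G.deg x) (hmin : G.Minimal W ξ) :
    ∃ D q r, G.Str W ξ D q r := by
  obtain ⟨hsym, hloop, hconn⟩ := hG
  have htight := G.tight hWs hmin
  obtain ⟨⟨η₀, hη₀, he₀⟩, -⟩ := hmin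
  set M := G.maxExt W ξ with hMdef
  have hM : G.Recurrent M := G.maxExt_recurrent hη₀ he₀
  have hME : EqOn M ξ W := fun x hx => by simp [hMdef, maxExt, hx]
  have hMout : ∀ x ∉ W, M x = G.deg x - 1 := fun x hx => by simp [hMdef, maxExt, hx]
  obtain ⟨T, hT⟩ := G.exists_time M hM.2
  have hws : ∀ w ∈ W, w ≠ G.sink := fun w hw h => hWs (h ▸ hw)
  let D : α → α → Prop := fun w y => w ∈ W ∧ 0 < G.b w y ∧ y ∈ G.Avoid M w
  -- order of burning
  have horder : ∀ η t, G.Recurrent η → EqOn η ξ W → G.IsTime η t → ∀ w y, D w y → t y < t w := by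
    rintro η t hη he ht w y ⟨hw, hb, hy⟩
    by_contra hle
    push Not at hle
    have h1 := ht.2.2 w (hws w hw)
    rw [he w hw, htight w hw] at h1
    have h2 := G.degIn_lt_of (F := (G.Avoid M w)ᶜ)
      (F' := Finset.univ.filter fun z => t w ≤ t z) (by
        intro z hz
        simp only [Finset.mem_filter, Finset.mem_univ, true_and]
        by_contra hlt
        push Not at hlt
        refine Finset.mem_compl.1 hz
          (G.time_le_mem_avoid ht (G.le_maxExt hη.1 he) w z ?_ hlt.le)
        rintro rfl
        omega) w y (by simpa using hle) (by simpa using hy) hb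
    omega
  have hDT : ∀ w y, D w y → T y < T w := horder M T hM hME hT
  -- a neighbour in `W` of `w` not burning later is in `D`
  have hAv : ∀ w y, y ≠ w → T y ≤ T w → y ∈ G.Avoid M w :=
    fun w => G.time_le_mem_avoid hT (fun _ _ => le_rfl) w
  -- spreading
  have hspread1 : ∀ w ∈ W, ∀ z ∈ G.Avoid M w, ∀ y ∉ W, 0 < G.b y z → y ∈ G.Avoid M w := by
    intro w hw z hz y hy hb
    have hyw : y ≠ w := fun h => hy (h ▸ hw)
    refine G.avoid_closed M w y hyw ?_
    have h1 := G.degIn_lt_of (F := (G.Avoid M w)ᶜ) (F' := Finset.univ) (Finset.subset_univ _) y z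
      (Finset.mem_univ _) (by simpa using hz) hb
    rw [degIn_univ] at h1
    rw [hMout y hy]
    omega
  let J : α → α → Prop := G.ReachIn {a : α | a ∉ W}
  have hJsym : ∀ x y, J x y → J y x := by
    intro x y h
    induction h with
    | refl => exact Relation.ReflTransGen.refl
    | tail _ hs ih =>
      exact Relation.ReflTransGen.head ⟨hs.2.1, hs.1, by rw [hsym]; exact hs.2.2⟩ ih
  have hJstep : ∀ x y, x ∉ W → y ∉ W → 0 < G.b x y → J x y :=
    fun x y hx hy hb => Relation.ReflTransGen.single ⟨hx, hy, hb⟩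
  have hspread : ∀ w ∈ W, ∀ x y, J x y → x ∈ G.Avoid M w → y ∈ G.Avoid M w := by
    intro w hw x y h hx
    induction h with
    | refl => exact hx
    | tail _ hs ih => exact hspread1 w hw _ ih _ hs.2.1 (by rw [hsym]; exact hs.2.2)
  -- every hole vertex has an earlier vertex of `W` adjacent to its component
  have hL : ∀ n c, T c = n → c ∉ W → ¬ J c G.sink →
      ∃ w ∈ W, (∃ c', J c c' ∧ 0 < G.b w c') ∧ T w < T c := by
    intro n
    induction n using Nat.strong_induction_on with
    | _ n ih =>
      intro c hn hc hcs
      have hcs' : c ≠ G.sink := fun h => hcs (h ▸ Relation.ReflTransGen.refl)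
      have h1 := hT.2.2 c hcs'
      rw [hMout c hc] at h1
      have h2 := hη₀.1 c (G.mem_VSet.2 hcs')
      have : ∃ y, 0 < G.b c y ∧ T y < T c := by
        by_contra hno
        push Not at hno
        have : G.deg c ≤ G.degIn (Finset.univ.filter fun y => T c ≤ T y) c := by
          rw [deg, degIn, Finset.sum_filter]
          refine Finset.sum_le_sum fun y _ => ?_
          split_ifs with h
          · exact le_rfl
          · by_contra hpos
            exact h (hno y (by omega))
        omega
      obtain ⟨y, hb, hlt⟩ := this
      by_cases hy : y ∈ W
      · exact ⟨y, hy, ⟨c, Relation.ReflTransGen.refl, by rwa [hsym]⟩, hlt⟩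
      · have hcy := hJstep c y hc hy hb
        obtain ⟨w, hw, ⟨c', hc', hb'⟩, hlt'⟩ := ih (T y) (by omega) y rfl hy
          (fun h => hcs (hcy.trans h))
        exact ⟨w, hw, ⟨c', hcy.trans hc', hb'⟩, by omega⟩
  -- parents of holes
  have hpar : ∀ S : Set α, ∃ w₀ : α, (G.sink ∈ S → w₀ = G.sink) ∧
      (G.sink ∉ S → (∃ w ∈ W, ∃ c' ∈ S, 0 < G.b w c') →
        w₀ ∈ W ∧ (∃ c' ∈ S, 0 < G.b w₀ c') ∧ ∀ w ∈ W, (∃ c' ∈ S, 0 < G.b w c') → T w₀ ≤ T w) := by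
    intro S
    by_cases hs : G.sink ∈ S
    · exact ⟨G.sink, fun _ => rfl, fun h => absurd hs h⟩
    by_cases hex : ∃ w ∈ W, ∃ c' ∈ S, 0 < G.b w c'
    · obtain ⟨w, hw, hc⟩ := hex
      obtain ⟨w₀, hw₀, hmin⟩ := Finset.exists_min_image
        (W.filter fun w => ∃ c' ∈ S, 0 < G.b w c') T ⟨w, Finset.mem_filter.2 ⟨hw, hc⟩⟩
      rw [Finset.mem_filter] at hw₀
      exact ⟨w₀, fun h => absurd h hs, fun _ _ => ⟨hw₀.1, hw₀.2,
        fun w hw hc => hmin w (Finset.mem_filter.2 ⟨hw, hc⟩)⟩⟩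
    · exact ⟨G.sink, fun _ => rfl, fun _ h => absurd h hex⟩
  choose par hpar1 hpar2 using hpar
  -- parents of vertices of `W`
  have hp : ∀ w, ∃ y, w ∈ W → D w y := by
    intro w
    by_cases hw : w ∈ W
    · have h1 := htight w hw
      have h2 := hstable w hw
      by_contra hno
      push Not at hno
      have : G.deg w ≤ G.degIn (G.Avoid M w)ᶜ w := by
        rw [deg, degIn, ← Finset.sum_add_sum_compl (G.Avoid M w), Finset.sum_eq_zero, zero_add]
        intro y hy
        by_contra hb
        exact (hno y).2 ⟨hw, by omega, hy⟩
      omega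
    · exact ⟨w, fun h => absurd h hw⟩
  choose p hp using hp
  let P : α → α := fun c => par {y | J c y}
  have hP1 : ∀ c, J c G.sink → P c = G.sink := fun c h => hpar1 _ h
  have hP2 : ∀ c ∉ W, ¬ J c G.sink → P c ∈ W ∧ (∃ c', J c c' ∧ 0 < G.b (P c) c') ∧
      (∀ w ∈ W, (∃ c', J c c' ∧ 0 < G.b w c') → T (P c) ≤ T w) ∧ T (P c) < T c := by
    intro c hc hcs
    obtain ⟨w, hw, hc', hlt⟩ := hL _ c rfl hc hcs
    obtain ⟨h1, h2, h3⟩ := hpar2 {y | J c y} hcs ⟨w, hw, hc'⟩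
    exact ⟨h1, h2, h3, lt_of_le_of_lt (h3 w hw hc') hlt⟩
  have hJeq : ∀ c c', J c c' → {y | J c y} = {y | J c' y} := by
    intro c c' h
    ext y
    exact ⟨fun h' => (hJsym _ _ h).trans h', fun h' => h.trans h'⟩
  refine ⟨D, fun x => if x ∈ W then p x else P x,
    fun x => if x ∈ W then T x else if J x G.sink then 0 else T (P x) + 1, ?_⟩
  have hss : J G.sink G.sink := Relation.ReflTransGen.refl
  refine ⟨?_, ?_, ?_, ?_, ?_, ?_, ?_, ?_, ?_, ?_, ?_, ?_⟩
  · simp only [hWs, if_false]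
    exact hP1 _ hss
  · simp only [hWs, if_false, hss, if_true]
  · intro w hw
    simp only [hw, if_true]
    exact hp w hw
  · exact fun w y h => h.1
  · exact fun w y h => h.2.1
  · intro w y h
    have h1 := hDT w y h
    simp only [h.1, if_true]
    by_cases hy : y ∈ W
    · simpa only [hy, if_true] using h1
    · simp only [hy, if_false]
      by_cases hys : J y G.sink
      · simp only [hys, if_true]
        exact hT.2.1 w (hws w h.1)
      · simp only [hys, if_false]
        have := (hP2 y hy hys).2.2.2
        omega
  · intro c hc
    simp only [hc, if_false]
    by_cases hcs : J c G.sink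
    · exact Or.inl (hP1 c hcs)
    · right
      have := hP2 c hc hcs
      refine ⟨this.1, ?_⟩
      simp only [this.1, if_true, hcs, if_false]
      omega
  · intro c c' hc hc' hb
    simp only [hc, hc', if_false, P]
    rw [hJeq c c' (hJstep c c' hc hc' hb)]
  · intro c c' hc hc' hb
    have hj := hJstep c c' hc hc' hb
    have hiff : J c G.sink ↔ J c' G.sink :=
      ⟨fun h' => (hJsym _ _ hj).trans h', fun h' => hj.trans h'⟩
    simp only [hc, hc', if_false, P]
    rw [hJeq c c' hj]
    simp only [hiff]
  · intro w hw y hb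
    by_cases hy : y ∈ W
    · have hyw : y ≠ w := by
        rintro rfl
        rw [hloop] at hb
        omega
      rcases le_total (T y) (T w) with h | h
      · exact Or.inl ⟨hw, hb, hAv w y hyw h⟩
      · exact Or.inr (Or.inl ⟨hy, hy, by rwa [hsym], hAv y w hyw.symm h⟩)
    · by_cases hys : J y G.sink
      · exact Or.inl ⟨hw, hb, hspread w hw _ _ (hJsym _ _ hys) (G.sink_mem_avoid M w)⟩
      · obtain ⟨h1, ⟨c', hc', hbc'⟩, h3, h4⟩ := hP2 y hy hys
        by_cases hPw : P y = w
        · right; right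
          refine ⟨hy, ?_⟩
          simpa only [hy, if_false] using hPw
        · left
          have hle := h3 w hw ⟨y, Relation.ReflTransGen.refl, hb⟩
          have hPA := hAv w (P y) hPw hle
          have hc'W : c' ∉ W := by
            rcases Relation.ReflTransGen.cases_tail hc' with h | ⟨z, _, hz⟩
            · rwa [h]
            · exact hz.2.1
          have hc'A := hspread1 w hw _ hPA c' hc'W (by rwa [hsym])
          exact ⟨hw, hb, hspread w hw _ _ (hJsym _ _ hc') hc'A⟩
  · intro w hw
    rw [htight w hw, degIn, degIn]
    refine Finset.sum_subset ?_ ?_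
    · intro y hy
      simp only [Finset.mem_filter, Finset.mem_univ, true_and]
      exact fun h => Finset.mem_compl.1 hy h.2.2
    · intro y hy hy'
      simp only [Finset.mem_filter, Finset.mem_univ, true_and] at hy
      rw [Finset.mem_compl, not_not] at hy'
      by_contra hb
      exact hy ⟨hw, Nat.pos_of_ne_zero hb, hy'⟩
  · intro η hη he
    obtain ⟨t, ht⟩ := G.exists_time η hη.2
    exact ⟨t, ht, horder η t hη he ht⟩

end structural
end Graph
end Sandpile
namespace Sandpile
namespace Graph
section cutting
set_option linter.unusedSectionVars false
variable {α : Type*} [Fintype α] [DecidableEq α] (G : Graph α)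

/-- Edge multiplicities after cutting. -/
noncomputable def cutB (D : α → α → Prop) (q : α → α) (x y : α) : ℕ :=
  if D x y then (if y = q x then 1 else 0)
  else if D y x then (if x = q y then 1 else 0) else G.b x y

/-- The graph after cutting. -/
noncomputable abbrev cut (D : α → α → Prop) (q : α → α) : Graph α := G.withB (G.cutB D q)

/-- Descendants of a set under the parent map. -/
noncomputable def desc (q : α → α) (F : Finset α) : Finset α :=
  Finset.univ.filter fun x => ∃ n : ℕ, q^[n] x ∈ F

lemma subset_desc (q : α → α) (F : Finset α) : F ⊆ desc q F := by
  intro x hx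
  simp only [desc, Finset.mem_filter, Finset.mem_univ, true_and]
  exact ⟨0, hx⟩

lemma desc_of_q {q : α → α} {F : Finset α} {x : α} (h : q x ∈ desc q F) : x ∈ desc q F := by
  simp only [desc, Finset.mem_filter, Finset.mem_univ, true_and] at h ⊢
  obtain ⟨n, hn⟩ := h
  exact ⟨n + 1, by rwa [Function.iterate_succ_apply]⟩

lemma q_of_desc {q : α → α} {F : Finset α} {x : α} (h : x ∈ desc q F) (hx : x ∉ F) :
    q x ∈ desc q F := by
  simp only [desc, Finset.mem_filter, Finset.mem_univ, true_and] at h ⊢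
  obtain ⟨n, hn⟩ := h
  cases n with
  | zero => exact absurd hn hx
  | succ n => exact ⟨n, by rwa [Function.iterate_succ_apply] at hn⟩

lemma deg_split (F : Finset α) (x : α) : G.deg x = G.degIn F x + G.degIn Fᶜ x :=
  (Finset.sum_add_sum_compl F _).symm

variable {G} {W : Finset α} {ξ : α → ℕ} {D : α → α → Prop} {q : α → α} {r : α → ℕ}

lemma Str.asymm (S : G.Str W ξ D q r) {x y : α} (h : D x y) : ¬ D y x := by
  intro h'
  have h1 := S.D_r _ _ h
  have h2 := S.D_r _ _ h'
  omega

lemma cut_D {x y : α} (h : D x y) : G.cutB D q x y = if y = q x then 1 else 0 := by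
  simp [cutB, h]

lemma Str.cut_symm (S : G.Str W ξ D q r) (hsym : ∀ x y, G.b x y = G.b y x) (x y : α) :
    G.cutB D q x y = G.cutB D q y x := by
  unfold cutB
  by_cases h : D x y
  · simp [h, S.asymm h]
  · by_cases h' : D y x <;> simp [h, h', hsym x y]

lemma Str.cut_le (S : G.Str W ξ D q r) (hsym : ∀ x y, G.b x y = G.b y x) (x y : α) :
    G.cutB D q x y ≤ G.b x y := by
  unfold cutB
  split_ifs with h1 h2 h3 h4
  · exact S.D_b _ _ h1
  · omega
  · rw [hsym]; exact S.D_b _ _ h3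
  · omega
  · exact le_rfl

lemma Str.cut_out (S : G.Str W ξ D q r) {x y : α} (hx : x ∉ W) (hy : ¬ D y x) :
    G.cutB D q x y = G.b x y := by
  have : ¬ D x y := fun h => hx (S.D_mem _ _ h)
  simp [cutB, this, hy]

lemma Str.deg_le (S : G.Str W ξ D q r) (hsym : ∀ x y, G.b x y = G.b y x) (x : α) :
    (G.cut D q).deg x ≤ G.deg x :=
  Finset.sum_le_sum fun y _ => S.cut_le hsym x y

lemma Str.cut_q (S : G.Str W ξ D q r) {w : α} (hw : w ∈ W) : G.cutB D q w (q w) = 1 := by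
  simp [cut_D (S.D_q w hw)]

lemma Str.deg_pos (S : G.Str W ξ D q r) {w : α} (hw : w ∈ W) : 1 ≤ (G.cut D q).deg w := by
  rw [← S.cut_q hw]
  exact Finset.single_le_sum (f := fun y => G.cutB D q w y) (fun _ _ => Nat.zero_le _)
    (Finset.mem_univ _)

/-- From configurations on `G` to configurations on the cut graph. -/
noncomputable def toCut (G : Graph α) (W : Finset α) (D : α → α → Prop) (q : α → α)
    (η : α → ℕ) (x : α) : ℕ :=
  if x = G.sink then 0 else if x ∈ W then (G.cut D q).deg x - 1
  else η x - (G.deg x - (G.cut D q).deg x)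

/-- From configurations on the cut graph to configurations on `G`. -/
noncomputable def ofCut (G : Graph α) (W : Finset α) (ξ : α → ℕ) (D : α → α → Prop) (q : α → α)
    (η : α → ℕ) (x : α) : ℕ :=
  if x = G.sink then 0 else if x ∈ W then ξ x
  else η x + (G.deg x - (G.cut D q).deg x)

lemma Str.forward (S : G.Str W ξ D q r) (hsym : ∀ x y, G.b x y = G.b y x) {η : α → ℕ}
    (hη : G.Recurrent η) (he : EqOn η ξ W) :
    (G.cut D q).Recurrent (G.toCut W D q η) ∧
      ∀ c ∉ W, c ≠ G.sink → G.deg c - (G.cut D q).deg c ≤ η c := by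
  obtain ⟨t, ht, hD⟩ := S.time η hη he
  have key : ∀ c ∉ W, G.deg c + (G.cut D q).degIn (Finset.univ.filter fun y => t c ≤ t y) c
      = (G.cut D q).deg c + G.degIn (Finset.univ.filter fun y => t c ≤ t y) c := by
    intro c hc
    set A := Finset.univ.filter fun y => t c ≤ t y with hA
    have h1 := G.deg_split A c
    have h2 := (G.cut D q).deg_split A c
    have h3 : (G.cut D q).degIn Aᶜ c = G.degIn Aᶜ c := by
      refine Finset.sum_congr rfl fun y hy => ?_
      refine S.cut_out hc fun h => ?_
      have := hD _ _ h
      simp [hA] at hy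
      omega
    omega
  have hbd : ∀ c ∉ W, c ≠ G.sink → G.deg c - (G.cut D q).deg c ≤ η c := by
    intro c hc hcs
    have h1 := key c hc
    have h2 := ht.2.2 c hcs
    omega
  refine ⟨⟨?_, ?_⟩, hbd⟩
  · intro x hx
    have hxs : x ≠ G.sink := (mem_VSet _).1 hx
    simp only [toCut, hxs, if_false]
    split_ifs with hw
    · have := S.deg_pos hw
      omega
    · have h1 := hbd x hw hxs
      have h2 := hη.1 x (G.mem_VSet.2 hxs)
      have h3 := S.deg_le hsym x
      omega
  · refine ample_of_time (t := t) _ ⟨ht.1, ht.2.1, ?_⟩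
    intro x hx
    have hxs : x ≠ G.sink := hx
    simp only [toCut, hxs, if_false]
    split_ifs with hw
    · have h1 := degIn_lt_of (G.cut D q) (F := Finset.univ.filter fun y => t x ≤ t y)
        (Finset.subset_univ _) x (q x) (Finset.mem_univ _)
        (by simpa using hD _ _ (S.D_q x hw)) (by
          show 0 < G.cutB D q x (q x)
          rw [S.cut_q hw]; omega)
      rw [degIn_univ] at h1
      omega
    · have h1 := key x hw
      have h2 := ht.2.2 x hxs
      have h3 := S.deg_le hsym x
      omega

lemma Str.desc_nbr (S : G.Str W ξ D q r) (hsym : ∀ x y, G.b x y = G.b y x) {F : Finset α} {x y : α}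
    (hx : x ∈ desc q F) (hq : q x ∈ desc q F ∨ (x ∈ W ∧ y ≠ q x)) (hb : 0 < G.cutB D q x y) :
    y ∈ desc q F := by
  have hb' : 0 < G.b x y := lt_of_lt_of_le hb (S.cut_le hsym x y)
  have hD1 : D x y → y = q x := by
    intro h
    rw [cut_D h] at hb
    by_contra hne
    simp [hne] at hb
  have hD2 : D y x → x = q y := by
    intro h
    rw [S.cut_symm hsym, cut_D h] at hb
    by_contra hne
    simp [hne] at hb
  by_cases hxW : x ∈ W
  · rcases S.cases x hxW y hb' with h | h | h
    · rcases hq with hq | hq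
      · rwa [hD1 h]
      · exact absurd (hD1 h) hq.2
    · exact desc_of_q (by rw [← hD2 h.2]; exact hx)
    · exact desc_of_q (by rw [h.2]; exact hx)
  · have hq : q x ∈ desc q F := by
      rcases hq with hq | hq
      · exact hq
      · exact absurd hq.1 hxW
    by_cases hyW : y ∈ W
    · rcases S.cases y hyW x (by rwa [hsym]) with h | h | h
      · exact desc_of_q (by rw [← hD2 h]; exact hx)
      · exact absurd h.1 hxW
      · rwa [← h.2]
    · exact desc_of_q (by rw [← S.q_adj x y hxW hyW hb']; exact hq)

lemma Str.key (S : G.Str W ξ D q r) (hsym : ∀ x y, G.b x y = G.b y x) {η : α → ℕ}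
    (hη : (G.cut D q).Recurrent η) {F : Finset α} (hF : F ⊆ G.VSet) (hne : F.Nonempty) :
    ∃ x ∈ F, (G.cut D q).degIn (desc q F) x ≤ η x := by
  have hs : desc q F ⊆ (G.cut D q).VSet := by
    intro x hx
    rw [mem_VSet]
    rintro rfl
    simp only [desc, Finset.mem_filter, Finset.mem_univ, true_and] at hx
    obtain ⟨n, hn⟩ := hx
    have : q^[n] G.sink = G.sink := Function.iterate_fixed S.q_sink n
    have h2 : G.sink ∈ F := by rw [← this]; exact hn
    exact (G.mem_VSet.1 (hF h2)) rfl
  obtain ⟨x, hx, hle⟩ := hη.2 (desc q F) hs (hne.mono (subset_desc q F))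
  by_cases hxF : x ∈ F
  · exact ⟨x, hxF, hle⟩
  exfalso
  have h1 := hη.1 x (hs hx)
  have h2 := (G.cut D q).deg_split (desc q F) x
  have h3 : (G.cut D q).degIn (desc q F)ᶜ x = 0 := by
    refine Finset.sum_eq_zero fun y hy => ?_
    by_contra hb
    exact Finset.mem_compl.1 hy (S.desc_nbr hsym hx (Or.inl (q_of_desc hx hxF))
      (Nat.pos_of_ne_zero hb))
  omega

lemma Str.eq_max (S : G.Str W ξ D q r) (hsym : ∀ x y, G.b x y = G.b y x) (hWs : G.sink ∉ W)
    {η : α → ℕ} (hη : (G.cut D q).Recurrent η) {w : α} (hw : w ∈ W) :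
    η w = (G.cut D q).deg w - 1 := by
  have hws : w ≠ G.sink := fun h => hWs (h ▸ hw)
  obtain ⟨x, hx, hle⟩ := S.key hsym hη (F := {w})
    (by rw [Finset.singleton_subset_iff]; exact G.mem_VSet.2 hws) ⟨w, Finset.mem_singleton_self w⟩
  rw [Finset.mem_singleton] at hx
  subst hx
  have h1 := hη.1 x ((mem_VSet _).2 hws)
  have h2 := (G.cut D q).deg_split (desc q {x}) x
  have h3 : (G.cut D q).degIn (desc q {x})ᶜ x ≤ (G.cut D q).degIn {q x} x := by
    refine Finset.sum_le_sum_of_ne_zero fun y hy hb => ?_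
    rw [Finset.mem_singleton]
    by_contra hne
    exact Finset.mem_compl.1 hy (S.desc_nbr hsym (subset_desc _ _ (Finset.mem_singleton_self x))
      (Or.inr ⟨hw, hne⟩) (Nat.pos_of_ne_zero hb))
  have h4 : (G.cut D q).degIn {q x} x = 1 := by
    rw [degIn, Finset.sum_singleton]
    exact S.cut_q hw
  omega

lemma Str.backward (S : G.Str W ξ D q r) (hsym : ∀ x y, G.b x y = G.b y x)
    (hstable : ∀ x ∈ W, ξ x < G.deg x)
    {η : α → ℕ} (hη : (G.cut D q).Recurrent η) :
    G.Recurrent (G.ofCut W ξ D q η) := by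
  refine ⟨?_, ?_⟩
  · intro x hx
    have hxs : x ≠ G.sink := G.mem_VSet.1 hx
    simp only [ofCut, hxs, if_false]
    split_ifs with hw
    · exact hstable x hw
    · have h1 := hη.1 x ((mem_VSet _).2 hxs)
      have h2 := S.deg_le hsym x
      omega
  · intro F hF hne
    obtain ⟨x₀, hx₀, hm⟩ := Finset.exists_min_image F r hne
    by_cases hex : ∃ w ∈ F, w ∈ W ∧ r w = r x₀
    · obtain ⟨w, hwF, hw, hrw⟩ := hex
      refine ⟨w, hwF, ?_⟩
      simp only [ofCut, G.mem_VSet.1 (hF hwF), hw, if_false, if_true]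
      rw [S.xi w hw]
      refine degIn_mono _ ?_ _
      intro y hy
      rw [Finset.mem_filter]
      refine ⟨Finset.mem_univ _, fun h => ?_⟩
      have h1 := S.D_r _ _ h
      have h2 := hm y hy
      omega
    · push Not at hex
      set F0 := F.filter fun x => r x = r x₀ with hF0
      obtain ⟨c, hc, hle⟩ := S.key hsym hη (F := F0) ((Finset.filter_subset _ _).trans hF)
        ⟨x₀, by simp [hF0, hx₀]⟩
      rw [hF0, Finset.mem_filter] at hc
      have hcW : c ∉ W := fun h => hex c hc.1 h hc.2
      refine ⟨c, hc.1, ?_⟩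
      simp only [ofCut, G.mem_VSet.1 (hF hc.1), hcW, if_false]
      have hcF : c ∈ desc q F0 := subset_desc _ _ (Finset.mem_filter.2 hc)
      have h1 := G.deg_split F c
      have h2 := (G.cut D q).deg_split F c
      have h3 : (G.cut D q).degIn Fᶜ c ≤ G.degIn Fᶜ c :=
        Finset.sum_le_sum fun y _ => S.cut_le hsym c y
      have h4 : (G.cut D q).degIn F c ≤ (G.cut D q).degIn (desc q F0) c := by
        refine Finset.sum_le_sum_of_ne_zero fun y hy hb => ?_
        have hb1 : 0 < G.cutB D q c y := Nat.pos_of_ne_zero hb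
        have hb' : 0 < G.b c y := lt_of_lt_of_le hb1 (S.cut_le hsym c y)
        by_cases hyW : y ∈ W
        · rcases S.cases y hyW c (by rwa [hsym]) with h | h | h
          · rw [S.cut_symm hsym, cut_D h] at hb1
            have hcq : c = q y := by
              by_contra hne
              simp [hne] at hb1
            exact desc_of_q (by rw [← hcq]; exact hcF)
          · exact absurd h.1 hcW
          · exfalso
            rcases S.q_out c hcW with h' | h'
            · rw [h.2] at h'
              exact (G.mem_VSet.1 (hF hy)) h'
            · rw [h.2] at h'
              have := hm y hy
              omega
        · refine subset_desc _ _ (Finset.mem_filter.2 ⟨hy, ?_⟩)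
          rw [← S.r_adj c y hcW hyW hb', hc.2]
      omega

lemma Str.card_eq (S : G.Str W ξ D q r) (hsym : ∀ x y, G.b x y = G.b y x) (hWs : G.sink ∉ W)
    (hstable : ∀ x ∈ W, ξ x < G.deg x) :
    Nat.card {η : α → ℕ // η G.sink = 0 ∧ G.Recurrent η ∧ EqOn η ξ W} =
      Nat.card {η : α → ℕ // η (G.cut D q).sink = 0 ∧ (G.cut D q).Recurrent η} := by
  refine Nat.card_congr ⟨fun η => ⟨G.toCut W D q η.1, by simp [toCut],
      (S.forward hsym η.2.2.1 η.2.2.2).1⟩,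
    fun η => ⟨G.ofCut W ξ D q η.1, by simp [ofCut], S.backward hsym hstable η.2.2, ?_⟩, ?_, ?_⟩
  · intro x hx
    have hxs : x ≠ G.sink := fun h => hWs (h ▸ hx)
    simp [ofCut, hxs, hx]
  · rintro ⟨η, h0, hη, he⟩
    refine Subtype.ext (funext fun x => ?_)
    by_cases hxs : x = G.sink
    · simp [ofCut, hxs, h0]
    by_cases hx : x ∈ W
    · simp [ofCut, hxs, hx, he x hx]
    · have := (S.forward hsym hη he).2 x hx hxs
      simp only [ofCut, toCut, hxs, hx, if_false]
      omega
  · rintro ⟨η, h0, hη⟩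
    refine Subtype.ext (funext fun x => ?_)
    by_cases hxs : x = G.sink
    · simp only [toCut, hxs, if_true]
      exact h0.symm
    by_cases hx : x ∈ W
    · simp [toCut, hxs, hx, S.eq_max hsym hWs hη hx]
    · simp only [ofCut, toCut, hxs, hx, if_false]
      omega

lemma Str.cut_sandpile (S : G.Str W ξ D q r) (hG : G.IsSandpileGraph) 
    {η : α → ℕ} (hη : (G.cut D q).Recurrent η) : (G.cut D q).IsSandpileGraph := by
  obtain ⟨hsym, hloop, -⟩ := hG
  have hsym' : ∀ x y, (G.cut D q).b x y = (G.cut D q).b y x := S.cut_symm hsym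
  have hs : ∀ x, Relation.ReflTransGen (fun u v => 0 < (G.cut D q).b u v) x G.sink := by
    by_contra hex
    push Not at hex
    obtain ⟨x₀, hx₀⟩ := hex
    set F : Finset α := Finset.univ.filter fun x =>
      ¬ Relation.ReflTransGen (fun u v => 0 < (G.cut D q).b u v) x G.sink with hF
    have hFs : F ⊆ (G.cut D q).VSet := by
      intro x hx
      rw [mem_VSet]
      rintro rfl
      rw [hF, Finset.mem_filter] at hx
      exact hx.2 Relation.ReflTransGen.refl
    obtain ⟨x, hx, hle⟩ := hη.2 F hFs ⟨x₀, by rw [hF, Finset.mem_filter]; exact ⟨Finset.mem_univ _, hx₀⟩⟩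
    have h1 := hη.1 x (hFs hx)
    have h2 := (G.cut D q).deg_split F x
    have h3 : (G.cut D q).degIn Fᶜ x = 0 := by
      refine Finset.sum_eq_zero fun y hy => ?_
      by_contra hb
      rw [hF, Finset.mem_filter] at hx
      rw [Finset.mem_compl, hF, Finset.mem_filter] at hy
      refine hy ⟨Finset.mem_univ _, fun h => hx.2 ?_⟩
      exact Relation.ReflTransGen.head (Nat.pos_of_ne_zero hb) h
    omega
  have hrev : ∀ x, Relation.ReflTransGen (fun u v => 0 < (G.cut D q).b u v) G.sink x := by
    intro x
    have h := hs x
    induction h using Relation.ReflTransGen.head_induction_on with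
    | refl => exact Relation.ReflTransGen.refl
    | head h' _ ih => exact Relation.ReflTransGen.tail ih (by rw [hsym']; exact h')
  refine ⟨hsym', fun x => ?_, fun x y => (hs x).trans (hrev y)⟩
  have := S.cut_le hsym x x
  rw [hloop] at this
  exact Nat.le_zero.1 this

/-- The removed edges. -/
lemma Str.exists_edges (S : G.Str W ξ D q r) (hG : G.IsSandpileGraph) :
    ∃ E : Finset G.OEdge, (∀ e ∈ E, e.1.1 ∈ W) ∧
      ∀ x y, G.b x y = G.cutB D q x y + G.nE E x y + G.nE E y x := by
  obtain ⟨hsym, hloop, -⟩ := hG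
  have hfin : {e : G.OEdge | D e.1.1 e.1.2.1 ∧ ¬ (e.1.2.1 = q e.1.1 ∧ e.1.2.2 = 0)}.Finite := by
    have : Finite G.OEdge := by
      refine Finite.of_injective
        (β := (Σ p : α × α, Fin (G.b p.1 p.2)))
        (fun e => ⟨(e.1.1, e.1.2.1), ⟨e.1.2.2, e.2⟩⟩) ?_
      rintro ⟨⟨x, y, k⟩, h⟩ ⟨⟨x', y', k'⟩, h'⟩ heq
      simp only [Sigma.mk.injEq, Prod.mk.injEq] at heq
      obtain ⟨⟨rfl, rfl⟩, h2⟩ := heq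
      have := eq_of_heq h2
      simp only [Fin.mk.injEq] at this
      subst this
      rfl
    exact Set.toFinite _
  refine ⟨hfin.toFinset, ?_, ?_⟩
  · intro e he
    rw [Set.Finite.mem_toFinset] at he
    exact S.D_mem _ _ he.1
  · have hn0 : ∀ x y, ¬ D x y → G.nE hfin.toFinset x y = 0 := by
      intro x y h
      rw [nE, Finset.card_eq_zero, Finset.filter_eq_empty_iff]
      rintro e he ⟨rfl, rfl⟩
      rw [Set.Finite.mem_toFinset] at he
      exact h he.1
    have hn1 : ∀ x y, D x y → G.nE hfin.toFinset x y + (if y = q x then 1 else 0) = G.b x y := by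
      intro x y h
      have hb := S.D_b _ _ h
      have hcard : G.nE hfin.toFinset x y =
          ((Finset.range (G.b x y)).filter fun k => ¬ (y = q x ∧ k = 0)).card := by
        rw [nE]
        refine Finset.card_bij (fun e _ => e.1.2.2) ?_ ?_ ?_
        · rintro e he
          rw [Finset.mem_filter, Set.Finite.mem_toFinset] at he
          obtain ⟨he, rfl, rfl⟩ := he
          rw [Finset.mem_filter, Finset.mem_range]
          exact ⟨e.2, he.2⟩
        · rintro ⟨⟨x1, y1, k1⟩, h1⟩ he1 ⟨⟨x2, y2, k2⟩, h2⟩ he2 heq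
          rw [Finset.mem_filter] at he1 he2
          obtain ⟨-, h3, h4⟩ := he1
          obtain ⟨-, h5, h6⟩ := he2
          simp only at h3 h4 h5 h6 heq
          subst h3 h4 h5 h6 heq
          rfl
        · intro k hk
          rw [Finset.mem_filter, Finset.mem_range] at hk
          refine ⟨⟨(x, y, k), hk.1⟩, ?_, rfl⟩
          rw [Finset.mem_filter, Set.Finite.mem_toFinset]
          exact ⟨⟨h, hk.2⟩, rfl, rfl⟩
      rw [hcard]
      by_cases hy : y = q x
      · have : ((Finset.range (G.b x y)).filter fun k => ¬ (y = q x ∧ k = 0)) =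
            (Finset.range (G.b x y)).erase 0 := by
          ext k
          simp [hy, and_comm]
        rw [this, Finset.card_erase_of_mem (by simpa using hb), Finset.card_range, if_pos hy]
        omega
      · simp [hy]
    intro x y
    by_cases h : D x y
    · rw [cut_D h, hn0 y x (S.asymm h), ← hn1 x y h]
      omega
    · by_cases h' : D y x
      · rw [S.cut_symm hsym, cut_D h', hn0 x y h, hsym, ← hn1 y x h']
        omega
      · rw [hn0 x y h, hn0 y x h']
        simp [cutB, h, h']

end cutting
end Graph
end Sandpile

open Sandpile

/-- The probability of a generalized minimal configuration is a
determinant of the matrix `K_G` over a set of edges touching `W` (the complement of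
`W` is now allowed to be disconnected). -/
theorem statement_2 {α : Type*} [Fintype α] [DecidableEq α] (G : Sandpile.Graph α)
    (hG : G.IsSandpileGraph) (W : Finset α) (hWne : W.Nonempty) (hWs : G.sink ∉ W)
    (ξ : α → ℕ) (hstable : ∀ x ∈ W, ξ x < G.deg x) (hmin : G.Minimal W ξ) :
    ∃ 𝓔 : Finset G.OEdge,
      (∀ e ∈ 𝓔, e.1.1 ∈ W ∨ e.1.2.1 ∈ W) ∧
      G.prob (fun η => Graph.EqOn η ξ W) =
        Matrix.det (Matrix.of fun e f : ↥𝓔 => G.Kmat e f) := by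
  obtain ⟨D, q, r, S⟩ := G.exists_str hG hWs hstable hmin
  obtain ⟨E, hEW, hE⟩ := S.exists_edges hG
  refine ⟨E, fun e he => Or.inl (hEW e he), ?_⟩
  obtain ⟨⟨η₀, hη₀, he₀⟩, -⟩ := hmin
  have hG' := S.cut_sandpile hG (S.forward hG.1 hη₀ he₀).1
  have h1 := G.card_recurrent hG
  have h2 := (G.cut D q).card_recurrent hG'
  have h3 := G.det_removal hG (G.cutB D q) E hE
  have h4 := G.det_pos hG
  rw [Graph.prob, S.card_eq hG.1 hWs hstable, h1, h2, h3, mul_div_cancel_left₀ _ h4.ne']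
end

section
/- Let G = (V ∪ {s}, E) be a finite sandpile graph, let W ⊆ V be nonempty with the induced subgraph of G on (V ∪ {s}) \ W connected, and let ξ be a minimal configuration on W. Then for every η ∈ R_G with η_W = ξ, we have η ∈ E_{V,W}: the first phase of burning based on W burns all of V \ W, i.e., U^{(1)}_I = W. -/
open scoped Classical

namespace Sandpile.Graph

theorem aux_mem_U1_succ {α : Type*} [Fintype α] [DecidableEq α] (G : Graph α)
    (η : α → ℕ) (Q : Finset α) (i : ℕ) (x : α) :
    x ∈ G.U1 η Q (i + 1) ↔
      x ∈ G.U1 η Q i ∧ (x ∈ Q ∨ η x < G.degIn (G.U1 η Q i) x) := by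
  rw [U1, Finset.mem_filter]

theorem aux_U1_step {α : Type*} [Fintype α] [DecidableEq α] (G : Graph α)
    (η : α → ℕ) (Q : Finset α) (n : ℕ) :
    G.U1 η Q (n + 1) = G.U1 η Q n ∨
      (G.U1 η Q (n + 1)).card + (n + 1) ≤ Fintype.card α := by
  have hsub : ∀ i, G.U1 η Q (i + 1) ⊆ G.U1 η Q i := fun i x hx =>
    ((G.aux_mem_U1_succ η Q i x).1 hx).1
  induction n with
  | zero =>
    by_cases h : G.U1 η Q 1 = G.U1 η Q 0
    · exact Or.inl h
    · right
      have h1 := Finset.card_lt_card ((hsub 0).ssubset_of_ne h)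
      have h2 := Finset.card_le_univ (G.U1 η Q 0)
      simp only [zero_add] at *
      omega
  | succ n ih =>
    rcases ih with h | h
    · left
      ext x
      rw [aux_mem_U1_succ, h, ← aux_mem_U1_succ, h]
    · by_cases h' : G.U1 η Q (n + 1 + 1) = G.U1 η Q (n + 1)
      · exact Or.inl h'
      · right
        have h1 := Finset.card_lt_card ((hsub (n + 1)).ssubset_of_ne h')
        omega

theorem aux_U1lim_lt {α : Type*} [Fintype α] [DecidableEq α] (G : Graph α)
    (η : α → ℕ) (Q : Finset α) (x : α) (hx : x ∈ G.U1lim η Q) (hxQ : x ∉ Q) :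
    η x < G.degIn (G.U1lim η Q) x := by
  have h : G.U1 η Q (Fintype.card α + 1) = G.U1 η Q (Fintype.card α) := by
    rcases G.aux_U1_step η Q (Fintype.card α) with h | h
    · exact h
    · omega
  unfold U1lim at *
  rw [← h, aux_mem_U1_succ] at hx
  exact hx.2.resolve_left hxQ

theorem aux_sub_U1 {α : Type*} [Fintype α] [DecidableEq α] (G : Graph α)
    (η : α → ℕ) (Q : Finset α) (hQ : Q ⊆ G.VSet) (n : ℕ) : Q ⊆ G.U1 η Q n := by
  induction n with
  | zero => simpa [U1] using hQ
  | succ n ih => exact fun x hx => (G.aux_mem_U1_succ η Q n x).2 ⟨ih hx, Or.inl hx⟩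

theorem aux_U1_sub {α : Type*} [Fintype α] [DecidableEq α] (G : Graph α)
    (η : α → ℕ) (Q : Finset α) (n : ℕ) : G.U1 η Q n ⊆ G.VSet := by
  induction n with
  | zero => simp [U1]
  | succ n ih => exact fun x hx => ih ((G.aux_mem_U1_succ η Q n x).1 hx).1

theorem aux_degIn_mono {α : Type*} [Fintype α] [DecidableEq α] (G : Graph α)
    {F F' : Finset α} (h : F ⊆ F') (x : α) : G.degIn F x ≤ G.degIn F' x :=
  Finset.sum_le_sum_of_subset h

theorem aux_degIn_lt {α : Type*} [Fintype α] [DecidableEq α] (G : Graph α)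
    {F F' : Finset α} (h : F ⊆ F') (x y : α) (hy : y ∈ F') (hyF : y ∉ F)
    (hb : 0 < G.b x y) : G.degIn F x + 1 ≤ G.degIn F' x := by
  have : G.degIn (insert y F) x ≤ G.degIn F' x :=
    G.aux_degIn_mono (Finset.insert_subset hy h) x
  have h2 : G.degIn (insert y F) x = G.b x y + G.degIn F x := Finset.sum_insert hyF
  omega

/-- Extending by maximal heights off `W` preserves recurrence. -/
theorem aux_ext {α : Type*} [Fintype α] [DecidableEq α] (G : Graph α)
    (W : Finset α) (hWs : G.sink ∉ W) (hconn : G.ConnectedOn {x : α | x ∉ W})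
    (ζ : α → ℕ) (hst : G.Stable ζ) (hoff : ∀ x ∉ W, G.deg x ≤ ζ x + 1)
    (hW : ∀ F ⊆ W, F.Nonempty → ∃ x ∈ F, G.degIn F x ≤ ζ x) : G.Recurrent ζ := by
  refine ⟨hst, fun F hF hne => ?_⟩
  by_cases hFW : F ⊆ W
  · exact hW F hFW hne
  · obtain ⟨x, hxF, hxW⟩ := Finset.not_subset.1 hFW
    by_contra hcon
    have hs : G.sink ∉ F := fun h => by simpa [VSet] using hF h
    have key : ∀ y, Relation.ReflTransGen
        (fun u v => u ∈ {x : α | x ∉ W} ∧ v ∈ {x : α | x ∉ W} ∧ 0 < G.b u v) x y → y ∈ F := by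
      intro y hy
      induction hy with
      | refl => exact hxF
      | @tail u v _ huv ih =>
        by_contra hv
        apply hcon
        refine ⟨u, ih, ?_⟩
        have h1 := G.aux_degIn_lt (Finset.subset_univ F) u v (Finset.mem_univ v) hv huv.2.2
        have h2 := hoff u huv.1
        have h3 : G.degIn Finset.univ u = G.deg u := rfl
        omega
    exact hs (key _ (hconn x hxW _ hWs))

/-- A minimal configuration is minimal in the wired graph. -/
theorem aux_wired {α : Type*} [Fintype α] [DecidableEq α] (G : Graph α)
    (W : Finset α) (hWs : G.sink ∉ W) (hconn : G.ConnectedOn {x : α | x ∉ W})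
    (ξ : α → ℕ) (hmin : G.Minimal W ξ) (w : α) (hw : w ∈ W) (h1 : 1 ≤ ξ w)
    (h : ∀ F ⊆ W, F.Nonempty → ∃ x ∈ F, G.degIn F x ≤ SubOne ξ w x) : False := by
  obtain ⟨⟨η, hη, hηξ⟩, hm⟩ := hmin
  have hWV : W ⊆ G.VSet := fun x hx => by
    simp only [VSet, Finset.mem_erase, Finset.mem_univ, and_true]
    rintro rfl; exact hWs hx
  let ζ : α → ℕ := fun x => if x ∈ W then ξ x else G.deg x - 1
  have hζW : ∀ x ∈ W, ζ x = ξ x := fun x hx => if_pos hx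
  have hζo : ∀ x ∉ W, ζ x = G.deg x - 1 := fun x hx => if_neg hx
  have hζst : G.Stable ζ := fun x hx => by
    have := hη.1 x hx
    by_cases hxW : x ∈ W
    · rw [hζW x hxW, ← hηξ x hxW]; exact this
    · rw [hζo x hxW]; omega
  have hle : ∀ x, SubOne ζ w x ≤ ζ x := fun x => by
    unfold SubOne; split_ifs <;> omega
  have hoff : ∀ x ∉ W, SubOne ζ w x = ζ x := fun x hx => by
    have : x ≠ w := by rintro rfl; exact hx hw
    simp [SubOne, this]
  have hon : ∀ x ∈ W, SubOne ζ w x = SubOne ξ w x := fun x hx => by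
    simp [SubOne, hζW x hx]
  have hsub : G.Recurrent (SubOne ζ w) := by
    refine G.aux_ext W hWs hconn _ (fun x hx => (hle x).trans_lt (hζst x hx)) ?_ ?_
    · intro x hx; rw [hoff x hx, hζo x hx]; omega
    · intro F hF hne
      obtain ⟨x, hx, hd⟩ := h F hF hne
      exact ⟨x, hx, by rw [hon x (hF hx)]; exact hd⟩
  have hrec : G.Recurrent ζ := ⟨hζst, fun F hF hne => by
    obtain ⟨x, hx, hd⟩ := hsub.2 F hF hne
    exact ⟨x, hx, hd.trans (hle x)⟩⟩
  exact hm ζ hrec hζW w hw ⟨by rw [hζW w hw]; exact h1, hsub⟩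

end Sandpile.Graph

open Sandpile

/-- Lemma `burn_alone`. If `ξ` is minimal on `W`, then every
recurrent `η` with `η_W = ξ` lies in `E_{V,W}`: phase one of the burning based on `W`
burns all of `V \ W`, i.e. the final phase-one unburnt set is exactly `W`. -/
theorem statement_5 {α : Type*} [Fintype α] [DecidableEq α] (G : Sandpile.Graph α)
    (hG : G.IsSandpileGraph) (W : Finset α) (hWne : W.Nonempty) (hWs : G.sink ∉ W)
    (hconn : G.ConnectedOn {x : α | x ∉ W}) (ξ : α → ℕ)
    (hstable : ∀ x ∈ W, ξ x < G.deg x) (hmin : G.Minimal W ξ) :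
    ∀ η : α → ℕ, G.Recurrent η → Graph.EqOn η ξ W → G.U1lim η W = W := by
  intro η hη hηξ
  have hWV : W ⊆ G.VSet := fun x hx => by
    simp only [Graph.VSet, Finset.mem_erase, Finset.mem_univ, and_true]
    rintro rfl; exact hWs hx
  have hWU : W ⊆ G.U1lim η W := G.aux_sub_U1 η W hWV _
  have hUV : G.U1lim η W ⊆ G.VSet := G.aux_U1_sub η W _
  have hlt := G.aux_U1lim_lt η W
  generalize G.U1lim η W = U at *
  by_contra hne
  obtain ⟨D, hD⟩ : ∃ D, D = U \ W := ⟨_, rfl⟩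
  have hDV : D ⊆ G.VSet := by rw [hD]; exact Finset.sdiff_subset.trans hUV
  have hDne : D.Nonempty := by
    rw [hD, Finset.sdiff_nonempty]
    exact fun h => hne (h.antisymm hWU)
  have hU : U = W ∪ D := by rw [hD, Finset.union_sdiff_of_subset hWU]
  -- the largest subset of `W` which stays unburnt as long as `D` is unburnt
  let P : Finset α → Prop := fun T => ∀ t ∈ T, η t < G.degIn (T ∪ D) t
  let S : Finset α := (W.powerset.filter P).sup id
  have hSW : S ⊆ W := Finset.sup_le fun T hT =>
    Finset.mem_powerset.1 (Finset.mem_filter.1 hT).1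
  have hmax : ∀ T ⊆ W, P T → T ⊆ S := fun T hT hP =>
    Finset.le_sup (f := id) (Finset.mem_filter.2 ⟨Finset.mem_powerset.2 hT, hP⟩)
  have hPS : P S := by
    intro t ht
    obtain ⟨T, hT, htT⟩ := Finset.mem_sup.1 ht
    have hT' := Finset.mem_filter.1 hT
    exact (hT'.2 t htT).trans_le (G.aux_degIn_mono
      (Finset.union_subset_union_left (hmax T (Finset.mem_powerset.1 hT'.1) hT'.2)) t)
  obtain ⟨x, hx, hxd⟩ := hη.2 (S ∪ D) (Finset.union_subset (hSW.trans hWV) hDV)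
    (hDne.mono Finset.subset_union_right)
  have hxD : x ∈ D := by
    rcases Finset.mem_union.1 hx with h | h
    · exact absurd (hPS x h) (not_lt.2 hxd)
    · exact h
  have hxU := hlt x (by rw [hU]; exact Finset.mem_union_right _ hxD)
    (by rw [hD] at hxD; exact (Finset.mem_sdiff.1 hxD).2)
  -- a vertex `w` of `W` burnt before `x` and adjacent to it
  obtain ⟨w, hwW, hwS, hb⟩ : ∃ w ∈ W, w ∉ S ∧ 0 < G.b x w := by
    by_contra hcon
    push Not at hcon
    have : G.degIn U x = G.degIn (S ∪ D) x := by
      symm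
      refine Finset.sum_subset (by rw [hU]; exact Finset.union_subset_union_left hSW) ?_
      intro y hy hyn
      rw [Finset.mem_union, not_or] at hyn
      rw [hU, Finset.mem_union] at hy
      exact Nat.le_zero.1 (hcon y (hy.resolve_right hyn.2) hyn.1)
    omega
  have hb' : 0 < G.b w x := by rw [hG.1 w x]; exact hb
  have hxW : x ∉ W := by rw [hD] at hxD; exact (Finset.mem_sdiff.1 hxD).2
  have main : ∀ F ⊆ W, w ∈ F → ∃ t ∈ F, G.degIn F t ≤ η t ∧
      (t = w → G.degIn F t + 1 ≤ η t) := by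
    intro F hF hwF
    have hnP : ¬ P (S ∪ F) := fun h =>
      hwS (hmax _ (Finset.union_subset hSW hF) h (Finset.mem_union_right _ hwF))
    simp only [P, not_forall, not_lt] at hnP
    obtain ⟨t, ht, htd⟩ := hnP
    have htF : t ∈ F := by
      rcases Finset.mem_union.1 ht with h | h
      · have h1 := hPS t h
        have h2 := G.aux_degIn_mono
          (Finset.union_subset_union_left (t := D) (Finset.subset_union_left (s₁ := S) (s₂ := F))) t
        omega
      · exact h
    have hFs : F ⊆ S ∪ F ∪ D :=
      Finset.subset_union_right.trans Finset.subset_union_left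
    refine ⟨t, htF, (G.aux_degIn_mono hFs t).trans htd, ?_⟩
    rintro rfl
    exact (G.aux_degIn_lt hFs t x (Finset.mem_union_right _ hxD)
      (fun h => hxW (hF h)) hb').trans htd
  refine G.aux_wired W hWs hconn ξ hmin w hwW ?_ ?_
  · obtain ⟨t, ht, _, h2⟩ := main {w} (by simpa using hwW) (by simp)
    have htw : t = w := by simpa using ht
    have h3 := h2 htw
    rw [htw, hηξ w hwW] at h3
    omega
  · intro F hF hFne
    by_cases hwF : w ∈ F
    · obtain ⟨t, ht, h1, h2⟩ := main F hF hwF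
      refine ⟨t, ht, ?_⟩
      rw [hηξ t (hF ht)] at h1 h2
      by_cases htw : t = w
      · have h3 := h2 htw
        simp only [Graph.SubOne, if_pos htw]
        omega
      · simpa only [Graph.SubOne, if_neg htw] using h1
    · obtain ⟨t, ht, h1⟩ := hη.2 F (hF.trans hWV) hFne
      refine ⟨t, ht, ?_⟩
      have htw : t ≠ w := by rintro rfl; exact hwF ht
      rw [hηξ t (hF ht)] at h1
      simpa only [Graph.SubOne, if_neg htw] using h1
end

section
/- Let G = (V ∪ {s}, E) be a finite sandpile graph and W ⊆ V with the induced subgraph of G on (V ∪ {s}) \ W connected. Suppose ξ ∈ R_{G_W} is minimal in G_W. Then the entry points of ξ are pairwise non-adjacent in G: for distinct w_i, w_j ∈ E(ξ,W), b_{w_i w_j} = 0. -/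
open scoped Classical

open Sandpile

/-- Lemma 2 (i). The entry points of a minimal configuration in the
wired graph `G_W` are pairwise non-adjacent in `G`. -/
theorem statement_6 {α : Type*} [Fintype α] [DecidableEq α] (G : Sandpile.Graph α)
    (hG : G.IsSandpileGraph) (W : Finset α) (hWs : G.sink ∉ W)
    (hconn : G.ConnectedOn {x : α | x ∉ W}) (ξ : α → ℕ)
    (hmin : G.WiredMinimal W ξ) :
    ∀ w₁ ∈ G.entryPoints W ξ, ∀ w₂ ∈ G.entryPoints W ξ, w₁ ≠ w₂ → G.b w₁ w₂ = 0 := by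
  intro w₁ h₁ w₂ h₂ hne
  by_contra hb
  obtain ⟨⟨hst, hamp⟩, hm⟩ := hmin
  simp only [Sandpile.Graph.entryPoints, Finset.mem_filter] at h₁ h₂
  obtain ⟨h₁W, h₁⟩ := h₁
  obtain ⟨h₂W, h₂⟩ := h₂
  have hsub : ∀ F ⊆ W, w₂ ∉ F → G.degIn F w₁ + 1 ≤ ξ w₁ := by
    intro F hF hw
    have h3 : G.degIn (insert w₂ F) w₁ ≤ G.degIn W w₁ :=
      Finset.sum_le_sum_of_subset (Finset.insert_subset h₂W hF)
    have h4 : G.degIn (insert w₂ F) w₁ = G.b w₁ w₂ + G.degIn F w₁ :=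
      Finset.sum_insert hw
    omega
  refine hm w₁ h₁W ⟨?_, ?_, ?_⟩
  · have := hsub ∅ (Finset.empty_subset _) (Finset.notMem_empty _)
    omega
  · intro x hx
    have := hst x hx
    unfold Sandpile.Graph.SubOne
    split_ifs <;> omega
  · intro F hF hne'
    by_cases hw : w₂ ∈ F
    · refine ⟨w₂, hw, ?_⟩
      have h3 : G.degIn F w₂ ≤ G.degIn W w₂ := Finset.sum_le_sum_of_subset hF
      unfold Sandpile.Graph.SubOne
      rw [if_neg (Ne.symm hne)]
      omega
    · obtain ⟨x, hx, hxa⟩ := hamp F hF hne'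
      refine ⟨x, hx, ?_⟩
      unfold Sandpile.Graph.SubOne
      split_ifs with h
      · subst h
        have := hsub F hF hw
        omega
      · exact hxa
end

section
/- Let G = (V ∪ {s}, E) be a finite sandpile graph and W ⊆ V with the induced subgraph of G on (V ∪ {s}) \ W connected. Suppose ξ ∈ R_{G_W} is minimal in G_W. Then every entry point w ∈ E(ξ,W) satisfies ξ(w) = deg_W(w) = Σ_{v ∈ W} b_{vw} exactly. -/
open scoped Classical

open Sandpile

/-- Lemma 2 (ii). Every entry point `w` of a minimal configuration
in the wired graph `G_W` satisfies `ξ(w) = deg_W(w)` exactly. -/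
theorem statement_7 {α : Type*} [Fintype α] [DecidableEq α] (G : Sandpile.Graph α)
    (hG : G.IsSandpileGraph) (W : Finset α) (hWs : G.sink ∉ W)
    (hconn : G.ConnectedOn {x : α | x ∉ W}) (ξ : α → ℕ)
    (hmin : G.WiredMinimal W ξ) :
    ∀ w ∈ G.entryPoints W ξ, ξ w = G.degIn W w := by
  intro w hw
  rw [Sandpile.Graph.entryPoints, Finset.mem_filter] at hw
  obtain ⟨hwW, hle⟩ := hw
  by_contra hne
  have hlt : G.degIn W w + 1 ≤ ξ w := by omega
  refine hmin.2 w hwW ⟨by omega, ?_, ?_⟩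
  · intro x hx
    have h := hmin.1.1 x hx
    unfold Sandpile.Graph.SubOne
    split_ifs <;> omega
  · intro F hF hne'
    by_cases hwF : w ∈ F
    · refine ⟨w, hwF, ?_⟩
      have h : G.degIn F w ≤ G.degIn W w :=
        Finset.sum_le_sum_of_subset hF
      simp only [Sandpile.Graph.SubOne, if_true]
      omega
    · obtain ⟨x, hx, h⟩ := hmin.1.2 F hF hne'
      refine ⟨x, hx, ?_⟩
      have hxw : x ≠ w := fun e => hwF (e ▸ hx)
      simpa only [Sandpile.Graph.SubOne, if_neg hxw] using h
end

section
/- Let G = (V ∪ {s}, E) be a finite sandpile graph and W ⊆ V with the induced subgraph of G on (V ∪ {s}) \ W connected. Suppose ξ ∈ R_{G_W} is minimal in G_W, and let W' = W \ E(ξ,W). Then the restriction ξ_{W'} is in R_{G_{W'}} and is minimal in G_{W'}. -/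
open scoped Classical

open Sandpile

/-- Lemma 2 (iii). Removing the entry points of a minimal
configuration in `G_W` leaves a configuration that is recurrent and minimal in
`G_{W'}`, where `W' = W \ E(ξ,W)`. -/
theorem statement_8 {α : Type*} [Fintype α] [DecidableEq α] (G : Sandpile.Graph α)
    (hG : G.IsSandpileGraph) (W : Finset α) (hWs : G.sink ∉ W)
    (hconn : G.ConnectedOn {x : α | x ∉ W}) (ξ : α → ℕ)
    (hmin : G.WiredMinimal W ξ) :
    G.WiredMinimal (W \ G.entryPoints W ξ) ξ := by
  obtain ⟨⟨hst, hamp⟩, hm⟩ := hmin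
  refine ⟨⟨fun x hx => hst x (Finset.sdiff_subset hx),
    fun F hF hne => hamp F (hF.trans Finset.sdiff_subset) hne⟩, ?_⟩
  rintro w hw ⟨h1, -, hrec⟩
  have hwW : w ∈ W := (Finset.mem_sdiff.mp hw).1
  have hwE : w ∉ G.entryPoints W ξ := (Finset.mem_sdiff.mp hw).2
  refine hm w hwW ⟨h1, ?_, ?_⟩
  · intro x hx
    refine lt_of_le_of_lt ?_ (hst x hx)
    unfold Sandpile.Graph.SubOne
    split_ifs <;> omega
  · intro F hF hne
    by_cases h : ∃ x ∈ F, x ∈ G.entryPoints W ξ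
    · obtain ⟨x, hxF, hxE⟩ := h
      refine ⟨x, hxF, ?_⟩
      have hxw : x ≠ w := fun e => hwE (e ▸ hxE)
      have h2 : G.degIn W x ≤ ξ x := (Finset.mem_filter.mp hxE).2
      have h3 : G.degIn F x ≤ G.degIn W x :=
        Finset.sum_le_sum_of_subset hF
      unfold Sandpile.Graph.SubOne
      rw [if_neg hxw]
      exact h3.trans h2
    · refine hrec F (fun x hx => Finset.mem_sdiff.mpr ⟨hF hx, fun hE => h ⟨x, hx, hE⟩⟩) hne
end

section
/- Let G = (V ∪ {s}, E) be a finite sandpile graph and W ⊆ V with the induced subgraph of G on (V ∪ {s}) \ W connected. Suppose ξ ∈ R_{G_W} satisfies: (i) the entry points E(ξ,W) are pairwise non-adjacent in G; (ii) ξ(w) = deg_W(w) for every w ∈ E(ξ,W); and (iii) with W' = W \ E(ξ,W), the restriction ξ_{W'} is minimal in G_{W'}. Then ξ is minimal in G_W. -/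
open scoped Classical

open Sandpile

theorem aux_sum_split {α : Type*} [Fintype α] [DecidableEq α] (G : Sandpile.Graph α)
    (hG : G.IsSandpileGraph) (W E : Finset α) (hE : E ⊆ W)
    (h1 : ∀ x ∈ E, ∀ y ∈ E, G.b x y = 0) :
    ∑ x ∈ W, G.degIn W x
      = ∑ x ∈ W \ E, G.degIn (W \ E) x + 2 * ∑ x ∈ E, G.degIn W x := by
  have hd : ∀ x, G.degIn W x = G.degIn (W \ E) x + G.degIn E x := by
    intro x
    unfold Sandpile.Graph.degIn
    exact (Finset.sum_sdiff hE).symm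
  have h0 : ∀ x ∈ E, G.degIn E x = 0 := by
    intro x hx
    unfold Sandpile.Graph.degIn
    exact Finset.sum_eq_zero (h1 x hx)
  have hs : ∑ x ∈ W \ E, G.degIn E x = ∑ x ∈ E, G.degIn (W \ E) x := by
    unfold Sandpile.Graph.degIn
    rw [Finset.sum_comm]
    exact Finset.sum_congr rfl fun x _ => Finset.sum_congr rfl fun y _ => hG.1 y x
  have h5 : ∑ x ∈ E, G.degIn W x = ∑ x ∈ E, G.degIn (W \ E) x := by
    refine Finset.sum_congr rfl fun x hx => ?_
    rw [hd, h0 x hx, add_zero]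
  rw [← Finset.sum_sdiff hE, h5]
  have h6 : ∑ x ∈ W \ E, G.degIn W x
      = ∑ x ∈ W \ E, G.degIn (W \ E) x + ∑ x ∈ W \ E, G.degIn E x := by
    rw [← Finset.sum_add_distrib]
    exact Finset.sum_congr rfl fun x _ => hd x
  omega

theorem aux_exists_min {α : Type*} [Fintype α] [DecidableEq α] (G : Sandpile.Graph α)
    (hG : G.IsSandpileGraph) (ξ : α → ℕ) (n : ℕ) : ∀ W : Finset α, W.card = n →
    (∀ F ⊆ W, F.Nonempty → ∃ x ∈ F, G.degIn F x ≤ ξ x) →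
    ∃ η : α → ℕ, (∀ x ∈ W, η x ≤ ξ x) ∧
      (∀ F ⊆ W, F.Nonempty → ∃ x ∈ F, G.degIn F x ≤ η x) ∧
      2 * ∑ x ∈ W, η x = ∑ x ∈ W, G.degIn W x := by
  induction n with
  | zero =>
    intro W hW _
    rw [Finset.card_eq_zero] at hW
    subst hW
    refine ⟨ξ, by simp, ?_, by simp⟩
    intro F hF hne
    rw [Finset.subset_empty] at hF
    exact absurd hF hne.ne_empty
  | succ n ih =>
    intro W hW hamp
    have hne : W.Nonempty := by
      rw [← Finset.card_pos]; omega
    obtain ⟨x, hx, hxle⟩ := hamp W (Finset.Subset.refl _) hne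
    have hsub : W \ {x} ⊆ W := Finset.sdiff_subset
    have hx1 : ({x} : Finset α) ⊆ W := by simpa using hx
    obtain ⟨η, h1, h2, h3⟩ := ih (W \ {x})
      (by rw [Finset.card_sdiff_of_subset hx1, hW]; simp)
      (fun F hF => hamp F (hF.trans hsub))
    have hne' : ∀ y ∈ W \ {x}, y ≠ x := by
      intro y hy
      simp at hy
      exact hy.2
    refine ⟨Function.update η x (G.degIn W x), ?_, ?_, ?_⟩
    · intro y hy
      by_cases hyx : y = x
      · subst hyx; simpa using hxle
      · rw [Function.update_of_ne hyx]
        exact h1 y (by simp [hy, hyx])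
    · intro F hF hFne
      by_cases hxF : x ∈ F
      · refine ⟨x, hxF, ?_⟩
        rw [Function.update_self]
        exact Finset.sum_le_sum_of_subset hF
      · have hF' : F ⊆ W \ {x} := by
          intro y hy
          have : y ≠ x := fun h => hxF (h ▸ hy)
          simp [hF hy, this]
        obtain ⟨y, hy, hyle⟩ := h2 F hF' hFne
        refine ⟨y, hy, ?_⟩
        rw [Function.update_of_ne (hne' y (hF' hy))]
        exact hyle
    · rw [aux_sum_split G hG W {x} hx1 (by simpa using hG.2.1 x), ← h3,
        ← Finset.sum_sdiff hx1]
      have : ∑ y ∈ W \ {x}, Function.update η x (G.degIn W x) y = ∑ y ∈ W \ {x}, η y :=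
        Finset.sum_congr rfl fun y hy => Function.update_of_ne (hne' y hy) _ _
      rw [this]
      simp
      ring

/-- Lemma 2, converse. If `ξ ∈ R_{G_W}` has pairwise non-adjacent
entry points, `ξ(w) = deg_W(w)` at every entry point, and the restriction to
`W' = W \ E(ξ,W)` is minimal in `G_{W'}`, then `ξ` is minimal in `G_W`. -/
theorem statement_9 {α : Type*} [Fintype α] [DecidableEq α] (G : Sandpile.Graph α)
    (hG : G.IsSandpileGraph) (W : Finset α) (hWs : G.sink ∉ W)
    (hconn : G.ConnectedOn {x : α | x ∉ W}) (ξ : α → ℕ)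
    (hrec : G.WiredRecurrent W ξ)
    (h1 : ∀ w₁ ∈ G.entryPoints W ξ, ∀ w₂ ∈ G.entryPoints W ξ, w₁ ≠ w₂ → G.b w₁ w₂ = 0)
    (h2 : ∀ w ∈ G.entryPoints W ξ, ξ w = G.degIn W w)
    (h3 : G.WiredMinimal (W \ G.entryPoints W ξ) ξ) :
    G.WiredMinimal W ξ := by
  set E := G.entryPoints W ξ with hEdef
  have hEW : E ⊆ W := Finset.filter_subset _ _
  have hsub : W \ E ⊆ W := Finset.sdiff_subset
  refine ⟨hrec, ?_⟩
  rintro w hw ⟨hpos, hstab, hamp⟩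
  by_cases hwE : w ∈ E
  · obtain ⟨ζ, z1, -, z3⟩ := aux_exists_min G hG _ _ W rfl hamp
    obtain ⟨η, e1, e2, e3⟩ := aux_exists_min G hG _ _ (W \ E) rfl h3.1.2
    have heq : ∀ v ∈ W \ E, ξ v ≤ η v := by
      intro v hv
      by_contra hlt
      push Not at hlt
      refine h3.2 v hv ⟨by omega, ?_, ?_⟩
      · intro x hx
        have := h3.1.1 x hx
        unfold Sandpile.Graph.SubOne
        split_ifs <;> omega
      · intro F hF hne
        obtain ⟨x, hx, hxle⟩ := e2 F hF hne
        refine ⟨x, hx, hxle.trans ?_⟩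
        have := e1 x (hF hx)
        unfold Sandpile.Graph.SubOne
        split_ifs with hxv
        · subst hxv; omega
        · exact this
    have hle := Finset.sum_le_sum heq
    have hsplit := aux_sum_split G hG W E hEW (fun x hx y hy => by
      by_cases hxy : x = y
      · subst hxy; exact hG.2.1 x
      · exact h1 x hx y hy hxy)
    have hE2 : ∑ x ∈ E, ξ x = ∑ x ∈ E, G.degIn W x := Finset.sum_congr rfl h2
    have htot := Finset.sum_sdiff (f := ξ) hEW
    have hlt : ∑ x ∈ W, ζ x < ∑ x ∈ W, ξ x := by
      refine Finset.sum_lt_sum (fun x hx => (z1 x hx).trans ?_) ⟨w, hw, (z1 w hw).trans_lt ?_⟩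
      · unfold Sandpile.Graph.SubOne
        split_ifs <;> omega
      · unfold Sandpile.Graph.SubOne
        rw [if_pos rfl]; omega
    omega
  · have hw' : w ∈ W \ E := Finset.mem_sdiff.2 ⟨hw, hwE⟩
    exact h3.2 w hw' ⟨hpos, fun x hx => hstab x (hsub hx), fun F hF => hamp F (hF.trans hsub)⟩
end
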